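/- Let K be any field, let E be any finite graph, and let ε be any nonzero idempotent in L_K(E). Then the corner ring ε L_K(E) ε is isomorphic as a K-algebra to L_K(G) for some finite graph G. -/

import Mathlib

/-!
The corner at an idempotent depends only on its equivalence class (`e = a b` and `f = b a` have
isomorphic corners), so it suffices to move `ε`, up to equivalence and enlargement of the graph,
to an idempotent whose corner is visibly a Leavitt path algebra.

*Diagonalization* (`exists_diag`). The idempotent `ε` is equivalent to a diagonal matrix of
vertices `v j`. Multiplying `ε` by sufficiently long paths leaves no ghost edges, and by the
Cuntz–Krieger relation `1` lies in the right ideal generated by such paths; hence the right ideal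
`ε L_K(E)` is generated by finitely many elements of the path algebra, each ending in a vertex.
If they are dependent over the path algebra, the weak algorithm replaces one of them by an element
of smaller degree, so after finitely many steps the nonzero generators are independent over the
path algebra. Multiplying by long paths again, they are independent over `L_K(E)`, so that
`ε L_K(E)` is the direct sum of the modules `v j L_K(E)`. Comparing coefficients in the path algebra
requires that paths be linearly independent in `L_K(E)`; this is seen in a representation built by
extending partially defined edge operators to a larger space (`exists_rep`).

*Sums of distinct vertices* (`exists_corner`). Let `E'` be `E` with one new vertex and one edge from
it to `v j` for every `j`. The new vertices are equivalent to the `v j`, so `ε` is equivalent in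
`L_K(E')` to the sum of the new vertices. As `E` is a hereditary subgraph, `L_K(E)` is a corner of
`L_K(E')` (`exists_incl`), and the corner of `L_K(E)` at `ε` is a corner of `L_K(E')`.

*Corners at sums of vertices* (`exists_corner_sum`). Let `S` be a set of vertices. If `S` is
hereditary, the corner is the algebra of the restriction to `S`. Otherwise an edge `f : w → v` has
`w ∈ S` and `v ∉ S`. The corner at `1 - f f*` is the algebra of a graph with `f` deleted and every
edge `e` into `w` supplemented by an edge standing for `e f` (`exists_shift`). The sum of `S` is
`(sum of S) (1 - f f*) + f f*`, which is equivalent to `(sum of S) (1 - f f*) + f* f`, and `f* f = v`: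
this is the sum of `S ∪ {v}` in the shifted graph. The number of vertices outside the set drops,
so the process stops.
-/

/-! ## Finite directed graphs -/

structure FinGraph where
  V : Type
  E : Type
  [fintypeV : Fintype V]
  [fintypeE : Fintype E]
  [decEqV : DecidableEq V]
  [decEqE : DecidableEq E]
  s : E → V
  r : E → V

attribute [instance] FinGraph.fintypeV FinGraph.fintypeE FinGraph.decEqV FinGraph.decEqE

namespace FinGraph

/-- A vertex is regular if it emits at least one edge. -/
def IsRegular (G : FinGraph) (v : G.V) : Prop := ∃ e : G.E, G.s e = v

/-- A sink emits no edges. -/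
def IsSink (G : FinGraph) (v : G.V) : Prop := ∀ e : G.E, G.s e ≠ v

/-- A source receives no edges. -/
def IsSource (G : FinGraph) (v : G.V) : Prop := ∀ e : G.E, G.r e ≠ v

/-- A graph is totally looped if every regular vertex is the base of a loop. -/
def TotallyLooped (G : FinGraph) : Prop :=
  ∀ v : G.V, G.IsRegular v → ∃ e : G.E, G.s e = v ∧ G.r e = v

/-- A set of vertices is hereditary if it is closed under ranges of edges emitted
from its elements (equivalently, under reachability by paths). -/
def Hereditary (G : FinGraph) (T : Finset G.V) : Prop :=
  ∀ e : G.E, G.s e ∈ T → G.r e ∈ T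

/-- A set of vertices `H` is saturated if every regular vertex all of whose emitted
edges end in `H` belongs to `H`. -/
def Saturated (G : FinGraph) (H : Set G.V) : Prop :=
  ∀ v : G.V, G.IsRegular v → (∀ e : G.E, G.s e = v → G.r e ∈ H) → v ∈ H

/-- The trivial graph: one vertex, no edges. -/
def IsTrivial (G : FinGraph) : Prop :=
  Nonempty G.V ∧ Subsingleton G.V ∧ IsEmpty G.E

/-- A graph is source-free if every vertex receives at least one edge. -/
def IsSourceFree (G : FinGraph) : Prop := ∀ v : G.V, ∃ e : G.E, G.r e = v

/-- The graph with `k` vertices and no edges. -/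
def discrete (k : ℕ) : FinGraph where
  V := Fin k
  E := Empty
  s := Empty.elim
  r := Empty.elim

/-- The straight line graph `A_n` with `n` vertices `v_0, …, v_{n-1}` and
edges `v_{i+1} → v_i` for `0 ≤ i ≤ n-2`. -/
def line (n : ℕ) : FinGraph where
  V := Fin n
  E := Fin (n - 1)
  s := fun i => ⟨i.1 + 1, by have := i.isLt; omega⟩
  r := fun i => ⟨i.1, by have := i.isLt; omega⟩

/-- Disjoint union of two graphs. -/
def disjUnion (G H : FinGraph) : FinGraph where
  V := G.V ⊕ H.V
  E := G.E ⊕ H.E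
  s := Sum.map G.s H.s
  r := Sum.map G.r H.r

/-- The restriction graph of `G` to a hereditary set `T` of vertices. -/
def restrict (G : FinGraph) (T : Finset G.V) (hT : G.Hereditary T) : FinGraph where
  V := {v : G.V // v ∈ T}
  E := {e : G.E // G.s e ∈ T}
  s := fun e => ⟨G.s e.1, e.2⟩
  r := fun e => ⟨G.r e.1, hT e.1 e.2⟩

/-- The "strands of hair" extension `F⁺(n)` of `F`:  at each vertex `v` a strand
`v^{n v - 1} → ⋯ → v^1 → v` of length `n v - 1` is attached. -/
def hairExtension (F : FinGraph) (n : F.V → ℕ) : FinGraph where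
  V := F.V ⊕ (Σ v : F.V, Fin (n v - 1))
  E := F.E ⊕ (Σ v : F.V, Fin (n v - 1))
  s := Sum.elim (fun e => Sum.inl (F.s e)) (fun p => Sum.inr p)
  r := Sum.elim (fun e => Sum.inl (F.r e))
    (fun p => if h : (p.2 : ℕ) = 0 then Sum.inl p.1
      else Sum.inr ⟨p.1, ⟨(p.2 : ℕ) - 1, by have := p.2.isLt; omega⟩⟩)

/-- The "Move (R)" graph at a vertex `w` which emits precisely one edge `f`
which is not a loop: `w` is removed, and each edge `e` into `w` is replaced by
an edge `[ef]` from `s e` to `r f`. -/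
def moveR (E : FinGraph) (w : E.V) (f : E.E)
    (hsf : E.s f = w) (huniq : ∀ e : E.E, E.s e = w → e = f) (hnl : E.r f ≠ w) : FinGraph where
  V := {v : E.V // v ≠ w}
  E := {e : E.E // E.r e ≠ w ∧ e ≠ f} ⊕ {e : E.E // E.r e = w}
  s := Sum.elim
    (fun e => ⟨E.s e.1, fun h => e.2.2 (huniq e.1 h)⟩)
    (fun e => ⟨E.s e.1, fun h => hnl ((huniq e.1 h) ▸ e.2)⟩)
  r := Sum.elim
    (fun e => ⟨E.r e.1, e.2.1⟩)
    (fun _ => ⟨E.r f, hnl⟩)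

/-- The collapse of `E` at a vertex `v` which is not the base of a loop:
`v` is removed, and for every `e ∈ r⁻¹(v)` and `f ∈ s⁻¹(v)` an edge `[ef]`
from `s e` to `r f` is added. -/
def collapse (E : FinGraph) (v : E.V)
    (hnl : ∀ e : E.E, E.s e = v → E.r e ≠ v) : FinGraph where
  V := {u : E.V // u ≠ v}
  E := {e : E.E // E.r e ≠ v ∧ E.s e ≠ v} ⊕ ({e : E.E // E.r e = v} × {f : E.E // E.s f = v})
  s := Sum.elim
    (fun e => ⟨E.s e.1, e.2.2⟩)
    (fun p => ⟨E.s p.1.1, fun h => (hnl p.1.1 h) p.1.2⟩)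
  r := Sum.elim
    (fun e => ⟨E.r e.1, e.2.1⟩)
    (fun p => ⟨E.r p.2.1, hnl p.2.1 p.2.2⟩)

/-- The in-split graph of `E` at a vertex `v`, with respect to a partition of
`r⁻¹(v)` into `n` classes (encoded as a surjection `P : r⁻¹(v) → Fin n`). -/
def inSplit (E : FinGraph) (v : E.V) (n : ℕ) (P : {e : E.E // E.r e = v} → Fin n) : FinGraph where
  V := {u : E.V // u ≠ v} ⊕ Fin n
  E := ({e : E.E // E.s e = v} × Fin n) ⊕ {f : E.E // E.s f ≠ v}
  s := Sum.elim (fun x => Sum.inr x.2) (fun f => Sum.inl ⟨E.s f.1, f.2⟩)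
  r := Sum.elim
    (fun x => if h : E.r x.1.1 = v then Sum.inr (P ⟨x.1.1, h⟩) else Sum.inl ⟨E.r x.1.1, h⟩)
    (fun f => if h : E.r f.1 = v then Sum.inr (P ⟨f.1, h⟩) else Sum.inl ⟨E.r f.1, h⟩)

/-- The out-split graph of `E` at a vertex `v`, with respect to a partition of
`s⁻¹(v)` into `n` classes (encoded as a surjection `P : s⁻¹(v) → Fin n`). -/
def outSplit (E : FinGraph) (v : E.V) (n : ℕ) (P : {e : E.E // E.s e = v} → Fin n) : FinGraph where
  V := {u : E.V // u ≠ v} ⊕ Fin n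
  E := ({e : E.E // E.r e = v} × Fin n) ⊕ {f : E.E // E.r f ≠ v}
  r := Sum.elim (fun x => Sum.inr x.2) (fun f => Sum.inl ⟨E.r f.1, f.2⟩)
  s := Sum.elim
    (fun x => if h : E.s x.1.1 = v then Sum.inr (P ⟨x.1.1, h⟩) else Sum.inl ⟨E.s x.1.1, h⟩)
    (fun f => if h : E.s f.1 = v then Sum.inr (P ⟨f.1, h⟩) else Sum.inl ⟨E.s f.1, h⟩)

/-- The source elimination graph `E \ v` at a source `v`. -/
def sourceElim (E : FinGraph) (v : E.V) (hsrc : E.IsSource v) : FinGraph where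
  V := {u : E.V // u ≠ v}
  E := {e : E.E // E.s e ≠ v}
  s := fun e => ⟨E.s e.1, e.2⟩
  r := fun e => ⟨E.r e.1, fun h => hsrc e.1 h⟩

/-- A chain of source eliminations starting at `E`. -/
inductive ElimChain (E : FinGraph) : FinGraph → Type 1
  | refl : ElimChain E E
  | step {H : FinGraph} (c : ElimChain E H) (v : H.V) (hsrc : H.IsSource v) :
      ElimChain E (H.sourceElim v hsrc)

/-- The canonical (injective) map from the vertices of the final graph of a
source elimination chain back into the vertices of the initial graph. -/
def ElimChain.vmap {E : FinGraph} : {F : FinGraph} → ElimChain E F → F.V → E.V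
  | _, .refl, u => u
  | _, .step c _ _, u => c.vmap u.1

/-- A chain of collapses, each performed at a regular vertex which is not the
base of a loop. -/
inductive CollapseChain (E : FinGraph) : FinGraph → Prop
  | refl : CollapseChain E E
  | step {H : FinGraph} (c : CollapseChain E H) (v : H.V) (hreg : H.IsRegular v)
      (hnl : ∀ e : H.E, H.s e = v → H.r e ≠ v) :
      CollapseChain E (H.collapse v hnl)

end FinGraph

/-! ## Leavitt path algebras -/

/-- Generators of the Leavitt path algebra: vertices, edges, and ghost edges. -/
inductive LPAGen (G : FinGraph) : Type
  | vert : G.V → LPAGen G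
  | edge : G.E → LPAGen G
  | ghost : G.E → LPAGen G

/-- The defining relations of the Leavitt path algebra of a finite graph. -/
inductive LeavittRel (K : Type) [Field K] (G : FinGraph) :
    FreeAlgebra K (LPAGen G) → FreeAlgebra K (LPAGen G) → Prop
  | vertMul (v w : G.V) :
      LeavittRel K G (FreeAlgebra.ι K (LPAGen.vert v) * FreeAlgebra.ι K (LPAGen.vert w))
        (if v = w then FreeAlgebra.ι K (LPAGen.vert v) else 0)
  | edgeLeft (e : G.E) :
      LeavittRel K G (FreeAlgebra.ι K (LPAGen.vert (G.s e)) * FreeAlgebra.ι K (LPAGen.edge e))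
        (FreeAlgebra.ι K (LPAGen.edge e))
  | edgeRight (e : G.E) :
      LeavittRel K G (FreeAlgebra.ι K (LPAGen.edge e) * FreeAlgebra.ι K (LPAGen.vert (G.r e)))
        (FreeAlgebra.ι K (LPAGen.edge e))
  | ghostLeft (e : G.E) :
      LeavittRel K G (FreeAlgebra.ι K (LPAGen.vert (G.r e)) * FreeAlgebra.ι K (LPAGen.ghost e))
        (FreeAlgebra.ι K (LPAGen.ghost e))
  | ghostRight (e : G.E) :
      LeavittRel K G (FreeAlgebra.ι K (LPAGen.ghost e) * FreeAlgebra.ι K (LPAGen.vert (G.s e)))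
        (FreeAlgebra.ι K (LPAGen.ghost e))
  | ghostEdge (e f : G.E) :
      LeavittRel K G (FreeAlgebra.ι K (LPAGen.ghost e) * FreeAlgebra.ι K (LPAGen.edge f))
        (if e = f then FreeAlgebra.ι K (LPAGen.vert (G.r e)) else 0)
  | cuntzKrieger (v : G.V) (hv : G.IsRegular v) :
      LeavittRel K G (FreeAlgebra.ι K (LPAGen.vert v))
        (∑ e ∈ Finset.univ.filter (fun e : G.E => G.s e = v),
          FreeAlgebra.ι K (LPAGen.edge e) * FreeAlgebra.ι K (LPAGen.ghost e))
  | unit :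
      LeavittRel K G 1 (∑ v : G.V, FreeAlgebra.ι K (LPAGen.vert v))

/-- The Leavitt path algebra `L_K(G)` of a finite graph `G` with coefficients in
a field `K`. -/
abbrev LeavittPathAlgebra (K : Type) [Field K] (G : FinGraph) : Type :=
  RingQuot (LeavittRel K G)

namespace LeavittPathAlgebra

variable (K : Type) [Field K] (G : FinGraph)

/-- The image of a vertex in the Leavitt path algebra. -/
def vert (v : G.V) : LeavittPathAlgebra K G :=
  RingQuot.mkAlgHom K (LeavittRel K G) (FreeAlgebra.ι K (LPAGen.vert v))

/-- The image of an edge in the Leavitt path algebra. -/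
def edge (e : G.E) : LeavittPathAlgebra K G :=
  RingQuot.mkAlgHom K (LeavittRel K G) (FreeAlgebra.ι K (LPAGen.edge e))

/-- The image of a ghost edge in the Leavitt path algebra. -/
def ghost (e : G.E) : LeavittPathAlgebra K G :=
  RingQuot.mkAlgHom K (LeavittRel K G) (FreeAlgebra.ι K (LPAGen.ghost e))

end LeavittPathAlgebra

/-! ## Ring-theoretic notions -/

/-- Two unital rings are Morita equivalent if their categories of left modules
are equivalent. -/
def MoritaEquivalent (R S : Type) [Ring R] [Ring S] : Prop :=
  Nonempty (ModuleCat.{0} R ≌ ModuleCat.{0} S)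

/-- An idempotent `e` of a ring `R` is full if `R e R = R`, i.e. `1` is a finite
sum of elements of the form `a * e * b`. -/
def IsFullIdempotent {R : Type} [Ring R] (e : R) : Prop :=
  IsIdempotentElem e ∧ ∃ (n : ℕ) (a b : Fin n → R), (∑ i, a i * e * b i) = 1

/-- `S` is isomorphic, as a (nonunital) `K`-algebra, to the corner ring
`ε R ε = {x : R | ε * x * ε = x}` of `R`. -/
def IsCornerIso (K : Type) [Field K] (S R : Type) [Ring S] [Ring R]
    [Algebra K S] [Algebra K R] (ε : R) : Prop :=
  ∃ φ : S →ₙₐ[K] R, Function.Injective φ ∧ Set.range φ = {x : R | ε * x * ε = x}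

/-- A module `Q` is a generator for the category of left `R`-modules iff `R` is
an epimorphic image (equivalently, a direct summand) of a finite direct sum of
copies of `Q`. -/
def IsGenerator (R Q : Type) [Ring R] [AddCommGroup Q] [Module R Q] : Prop :=
  ∃ (n : ℕ) (f : (Fin n → Q) →ₗ[R] R), Function.Surjective f

namespace LeavittPathAlgebra

/-! ### Generators, relations and homomorphisms -/

section Relations

variable {K : Type} [Field K] {G : FinGraph}

lemma vert_mul_vert (v w : G.V) :
    vert K G v * vert K G w = if v = w then vert K G v else 0 := by
  have h := RingQuot.mkAlgHom_rel K (LeavittRel.vertMul (K := K) v w)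
  rw [map_mul] at h
  simp only [vert, h]
  split_ifs <;> simp

lemma vert_mul_self (v : G.V) : vert K G v * vert K G v = vert K G v := by
  simp [vert_mul_vert]

lemma vert_mul_edge_self (e : G.E) : vert K G (G.s e) * edge K G e = edge K G e := by
  simpa [vert, edge] using RingQuot.mkAlgHom_rel K (LeavittRel.edgeLeft (K := K) e)

lemma edge_mul_vert_self (e : G.E) : edge K G e * vert K G (G.r e) = edge K G e := by
  simpa [vert, edge] using RingQuot.mkAlgHom_rel K (LeavittRel.edgeRight (K := K) e)

lemma vert_mul_ghost_self (e : G.E) : vert K G (G.r e) * ghost K G e = ghost K G e := by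
  simpa [vert, ghost] using RingQuot.mkAlgHom_rel K (LeavittRel.ghostLeft (K := K) e)

lemma ghost_mul_vert_self (e : G.E) : ghost K G e * vert K G (G.s e) = ghost K G e := by
  simpa [vert, ghost] using RingQuot.mkAlgHom_rel K (LeavittRel.ghostRight (K := K) e)

lemma ghost_mul_edge (e f : G.E) :
    ghost K G e * edge K G f = if e = f then vert K G (G.r e) else 0 := by
  have h := RingQuot.mkAlgHom_rel K (LeavittRel.ghostEdge (K := K) e f)
  rw [map_mul] at h
  simp only [vert, edge, ghost, h]
  split_ifs <;> simp

lemma vert_eq_sum (v : G.V) (hv : G.IsRegular v) :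
    vert K G v = ∑ e ∈ Finset.univ.filter (fun e : G.E => G.s e = v),
      edge K G e * ghost K G e := by
  simpa [vert, edge, ghost] using RingQuot.mkAlgHom_rel K (LeavittRel.cuntzKrieger (K := K) v hv)

lemma one_eq_sum_vert : (1 : LeavittPathAlgebra K G) = ∑ v : G.V, vert K G v := by
  simpa [vert] using RingQuot.mkAlgHom_rel K (LeavittRel.unit (K := K) (G := G))

lemma vert_mul_edge (v : G.V) (e : G.E) :
    vert K G v * edge K G e = if v = G.s e then edge K G e else 0 := by
  rw [← vert_mul_edge_self e, ← mul_assoc, vert_mul_vert]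
  split_ifs with h
  · rw [h]
  · simp

lemma edge_mul_vert (v : G.V) (e : G.E) :
    edge K G e * vert K G v = if G.r e = v then edge K G e else 0 := by
  rw [← edge_mul_vert_self e, mul_assoc, vert_mul_vert]
  split_ifs with h <;> simp

lemma vert_mul_ghost (v : G.V) (e : G.E) :
    vert K G v * ghost K G e = if v = G.r e then ghost K G e else 0 := by
  rw [← vert_mul_ghost_self e, ← mul_assoc, vert_mul_vert]
  split_ifs with h
  · rw [h]
  · simp

lemma ghost_mul_vert (v : G.V) (e : G.E) :
    ghost K G e * vert K G v = if G.s e = v then ghost K G e else 0 := by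
  rw [← ghost_mul_vert_self e, mul_assoc, vert_mul_vert]
  split_ifs with h <;> simp

lemma edge_mul_edge_of_ne (e f : G.E) (h : G.r e ≠ G.s f) : edge K G e * edge K G f = 0 := by
  rw [← edge_mul_vert_self e, mul_assoc, vert_mul_edge, if_neg h, mul_zero]

lemma ghost_mul_ghost_of_ne (e f : G.E) (h : G.s e ≠ G.r f) :
    ghost K G e * ghost K G f = 0 := by
  rw [← ghost_mul_vert_self e, mul_assoc, vert_mul_ghost, if_neg h, mul_zero]

lemma edge_mul_ghost_of_ne (e f : G.E) (h : G.r e ≠ G.r f) :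
    edge K G e * ghost K G f = 0 := by
  rw [← edge_mul_vert_self e, mul_assoc, vert_mul_ghost, if_neg h, mul_zero]

/-- Induction on elements, without a separate case for `1`, which is a sum of vertices. -/
@[elab_as_elim]
lemma induction_on {P : LeavittPathAlgebra K G → Prop} (x : LeavittPathAlgebra K G)
    (zero : P 0) (add : ∀ a b, P a → P b → P (a + b)) (smul : ∀ (k : K) a, P a → P (k • a))
    (mul : ∀ a b, P a → P b → P (a * b)) (hv : ∀ v, P (vert K G v))
    (he : ∀ e, P (edge K G e)) (hg : ∀ e, P (ghost K G e)) : P x := by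
  obtain ⟨y, rfl⟩ := RingQuot.mkAlgHom_surjective K (LeavittRel K G) x
  induction y using FreeAlgebra.induction with
  | grade0 k =>
    rw [Algebra.algebraMap_eq_smul_one, map_smul, map_one, one_eq_sum_vert]
    exact smul _ _ (Finset.sum_induction _ P add zero fun v _ => hv v)
  | grade1 g => cases g with
    | vert v => exact hv v
    | edge e => exact he e
    | ghost e => exact hg e
  | mul a b ha hb => rw [map_mul]; exact mul _ _ ha hb
  | add a b ha hb => rw [map_add]; exact add _ _ ha hb

/-- A family of elements of `C` indexed by the vertices, edges and ghost edges of `G` and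
satisfying the relations of `L_K(G)`, except that the vertices need not add up to `1`. -/
structure IsFamily {C : Type} [Ring C] (G : FinGraph) (p : G.V → C) (x y : G.E → C) : Prop where
  vertMul : ∀ v w, p v * p w = if v = w then p v else 0
  edgeLeft : ∀ e, p (G.s e) * x e = x e
  edgeRight : ∀ e, x e * p (G.r e) = x e
  ghostLeft : ∀ e, p (G.r e) * y e = y e
  ghostRight : ∀ e, y e * p (G.s e) = y e
  ghostEdge : ∀ e f, y e * x f = if e = f then p (G.r e) else 0
  ck : ∀ v, G.IsRegular v → p v = ∑ e ∈ Finset.univ.filter (fun e : G.E => G.s e = v), x e * y e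

/-- The universal property of `L_K(G)`. -/
lemma exists_algHom {C : Type} [Ring C] [Algebra K C] {p : G.V → C} {x y : G.E → C}
    (h : IsFamily G p x y) (h1 : (1 : C) = ∑ v, p v) :
    ∃ φ : LeavittPathAlgebra K G →ₐ[K] C, (∀ v, φ (vert K G v) = p v) ∧
      (∀ e, φ (edge K G e) = x e) ∧ (∀ e, φ (ghost K G e) = y e) := by
  let g : LPAGen G → C := fun t => match t with
    | .vert v => p v
    | .edge e => x e
    | .ghost e => y e
  have hg : ∀ ⦃a b⦄, LeavittRel K G a b → FreeAlgebra.lift K g a = FreeAlgebra.lift K g b := by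
    intro a b hab
    cases hab with
    | vertMul v w =>
      rw [map_mul, apply_ite (FreeAlgebra.lift K g)]; simpa [g] using h.vertMul v w
    | edgeLeft e => simpa [g] using h.edgeLeft e
    | edgeRight e => simpa [g] using h.edgeRight e
    | ghostLeft e => simpa [g] using h.ghostLeft e
    | ghostRight e => simpa [g] using h.ghostRight e
    | ghostEdge e f =>
      rw [map_mul, apply_ite (FreeAlgebra.lift K g)]; simpa [g] using h.ghostEdge e f
    | cuntzKrieger v hv => simpa [g] using h.ck v hv
    | unit => simpa [g] using h1
  refine ⟨RingQuot.liftAlgHom K ⟨FreeAlgebra.lift K g, hg⟩, ?_, ?_, ?_⟩ <;> intro a <;>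
    simp [vert, edge, ghost, RingQuot.liftAlgHom_mkAlgHom_apply, g]

/-- The scalars act on the corner `pCp` through multiples of its identity `p`. -/
@[reducible]
noncomputable def cornerAlgebra {C : Type} [Ring C] [Algebra K C] {p : C}
    (hp : IsIdempotentElem p) : Algebra K hp.Corner where
  smul k c := ⟨k • c.1, by
    obtain ⟨a, ha⟩ := c.2
    exact ⟨k • a, by simp [← ha]⟩⟩
  algebraMap :=
    { toFun := fun k => ⟨k • p, k • p, by simp [hp.eq]⟩
      map_one' := Subtype.ext (one_smul K p)
      map_mul' := fun a b => Subtype.ext (by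
        change (a * b) • p = (a • p) * (b • p)
        simp [hp.eq, mul_smul, smul_comm a b])
      map_zero' := Subtype.ext (zero_smul K p)
      map_add' := fun a b => Subtype.ext (add_smul a b p) }
  commutes' k c := Subtype.ext (by
    change (k • p) * c.1 = c.1 * (k • p)
    have := (Subsemigroup.mem_corner_iff hp).mp c.2
    simp [this.1, this.2])
  smul_def' k c := Subtype.ext (by
    change k • c.1 = (k • p) * c.1
    have := (Subsemigroup.mem_corner_iff hp).mp c.2
    simp [this.1])

/-- The non-unital universal property: a family whose vertices do not add up to `1`
is a family in the corner of their sum. -/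
lemma exists_hom {C : Type} [Ring C] [Algebra K C] {p : G.V → C} {x y : G.E → C}
    (h : IsFamily G p x y) :
    ∃ φ : LeavittPathAlgebra K G →ₙₐ[K] C, (∀ v, φ (vert K G v) = p v) ∧
      (∀ e, φ (edge K G e) = x e) ∧ (∀ e, φ (ghost K G e) = y e) := by
  set q : C := ∑ v, p v with hq
  have lp : ∀ v, q * p v = p v := by
    intro v; simp [hq, Finset.sum_mul, h.vertMul]
  have rp : ∀ v, p v * q = p v := by
    intro v; simp [hq, Finset.mul_sum, h.vertMul]
  have hid : IsIdempotentElem q := by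
    change q * q = q
    calc q * q = ∑ v, p v * q := by rw [← Finset.sum_mul]
      _ = q := Finset.sum_congr rfl fun v _ => rp v
  have lx : ∀ e, q * x e = x e := fun e => by rw [← h.edgeLeft e, ← mul_assoc, lp]
  have rx : ∀ e, x e * q = x e := fun e => by rw [← h.edgeRight e, mul_assoc, rp]
  have ly : ∀ e, q * y e = y e := fun e => by rw [← h.ghostLeft e, ← mul_assoc, lp]
  have ry : ∀ e, y e * q = y e := fun e => by rw [← h.ghostRight e, mul_assoc, rp]
  have mem : ∀ {a : C}, q * a = a → a * q = a → a ∈ Subsemigroup.corner q :=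
    fun h1 h2 => (Subsemigroup.mem_corner_iff hid).mpr ⟨h1, h2⟩
  let _ := cornerAlgebra (K := K) hid
  let ι : hid.Corner →ₙₐ[K] C :=
    { toFun := fun c => c.1
      map_smul' := fun _ _ => rfl
      map_zero' := rfl
      map_add' := fun _ _ => rfl
      map_mul' := fun _ _ => rfl }
  have ιinj : Function.Injective ι := Subtype.val_injective
  let p' : G.V → hid.Corner := fun v => ⟨p v, mem (lp v) (rp v)⟩
  let x' : G.E → hid.Corner := fun v => ⟨x v, mem (lx v) (rx v)⟩
  let y' : G.E → hid.Corner := fun v => ⟨y v, mem (ly v) (ry v)⟩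
  have hp' : ∀ v, ι (p' v) = p v := fun _ => rfl
  have hx' : ∀ v, ι (x' v) = x v := fun _ => rfl
  have hy' : ∀ v, ι (y' v) = y v := fun _ => rfl
  have hfam : IsFamily G p' x' y' := by
    constructor
    · intro v w; apply ιinj
      rw [map_mul, apply_ite ι, map_zero, hp', hp', h.vertMul]
    · intro e; apply ιinj; rw [map_mul, hp', hx', h.edgeLeft]
    · intro e; apply ιinj; rw [map_mul, hp', hx', h.edgeRight]
    · intro e; apply ιinj; rw [map_mul, hp', hy', h.ghostLeft]
    · intro e; apply ιinj; rw [map_mul, hp', hy', h.ghostRight]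
    · intro e f; apply ιinj
      rw [map_mul, apply_ite ι, map_zero, hp', hx', hy', h.ghostEdge]
    · intro v hv; apply ιinj
      rw [map_sum, hp', h.ck v hv]
      exact Finset.sum_congr rfl fun e _ => by rw [map_mul, hx', hy']
  obtain ⟨φ, h1, h2, h3⟩ := exists_algHom (K := K) hfam (by
    apply ιinj; rw [map_sum]; rfl)
  refine ⟨ι.comp (φ : LeavittPathAlgebra K G →ₙₐ[K] hid.Corner), ?_, ?_, ?_⟩ <;> intro a
  · exact (congrArg ι (h1 a)).trans (hp' a)
  · exact (congrArg ι (h2 a)).trans (hx' a)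
  · exact (congrArg ι (h3 a)).trans (hy' a)

/-- Two non-unital homomorphisms agreeing on vertices, edges and ghost edges are equal. -/
lemma hom_ext {C : Type} [Ring C] [Algebra K C] {φ ψ : LeavittPathAlgebra K G →ₙₐ[K] C}
    (hv : ∀ v, φ (vert K G v) = ψ (vert K G v)) (he : ∀ e, φ (edge K G e) = ψ (edge K G e))
    (hg : ∀ e, φ (ghost K G e) = ψ (ghost K G e)) (x : LeavittPathAlgebra K G) : φ x = ψ x := by
  induction x using induction_on with
  | zero => simp
  | add a b ha hb => simp [ha, hb]
  | smul k a ha => simp [ha]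
  | mul a b ha hb => simp [ha, hb]
  | hv v => exact hv v
  | he e => exact he e
  | hg e => exact hg e

/-- The generators of `L_K(G)` themselves form a family. -/
lemma isFamily_self : IsFamily G (vert K G) (edge K G) (ghost K G) :=
  ⟨vert_mul_vert, vert_mul_edge_self, edge_mul_vert_self, vert_mul_ghost_self,
    ghost_mul_vert_self, ghost_mul_edge, vert_eq_sum⟩

end Relations

end LeavittPathAlgebra

/-! ### Shifting an edge -/

namespace FinGraph

/-- Whether the vertex is kept when `f` is shifted away: the source of `f` is kept only if it emits
another edge, and all other vertices are kept. -/
abbrev Survives (E : FinGraph) (f : E.E) (u : E.V) : Prop :=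
  u ≠ E.s f ∨ ∃ e : E.E, e ≠ f ∧ E.s e = E.s f

/-- For an edge `f : w → v` that is not a loop: delete `f`, add for every edge `e` into `w` an edge
`s e → v` (standing for `e f`), and delete `w` as well in case `f` was the only edge leaving it.
The vertex `w` of the new graph stands for the idempotent `w - f f*` of the old algebra. -/
abbrev shift (E : FinGraph) (f : E.E) (hf : E.r f ≠ E.s f) : FinGraph where
  V := {u : E.V // E.Survives f u}
  E := {e : E.E // e ≠ f ∧ E.Survives f (E.r e)} ⊕ {e : E.E // E.r e = E.s f}
  s := Sum.elim
    (fun e => ⟨E.s e.1, (em (E.s e.1 = E.s f)).elim (fun h => Or.inr ⟨e.1, e.2.1, h⟩) Or.inl⟩)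
    (fun e => ⟨E.s e.1, (em (E.s e.1 = E.s f)).elim
      (fun h => Or.inr ⟨e.1, fun h' => hf ((congrArg E.r h').symm.trans e.2), h⟩) Or.inl⟩)
  r := Sum.elim (fun e => ⟨E.r e.1, e.2.2⟩) (fun _ => ⟨E.r f, Or.inl hf⟩)

end FinGraph

namespace LeavittPathAlgebra

lemma sum_subtype_ite {α M : Type} [Fintype α] [AddCommMonoid M] (p : α → Prop) [DecidablePred p]
    (F : α → M) : ∑ x : {a // p a}, F x.1 = ∑ a, if p a then F a else 0 := by
  rw [← Finset.sum_filter]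
  exact (Finset.sum_subtype _ (by simp) F).symm

section Shift

variable {K : Type} [Field K] {E : FinGraph} (f : E.E) (hf : E.r f ≠ E.s f)

/-- The idempotent `1 - f f*`. -/
def coRange (K : Type) [Field K] {E : FinGraph} (f : E.E) : LeavittPathAlgebra K E :=
  1 - edge K E f * ghost K E f

lemma coRange_mul_edge_self : coRange K f * edge K E f = 0 := by
  simp [coRange, sub_mul, mul_assoc, ghost_mul_edge, edge_mul_vert_self]

lemma ghost_self_mul_coRange : ghost K E f * coRange K f = 0 := by
  simp [coRange, mul_sub, ← mul_assoc, ghost_mul_edge, vert_mul_ghost_self]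

lemma coRange_mul_edge {e : E.E} (h : e ≠ f) : coRange K f * edge K E e = edge K E e := by
  simp [coRange, sub_mul, mul_assoc, ghost_mul_edge, h.symm]

lemma ghost_mul_coRange {e : E.E} (h : e ≠ f) : ghost K E e * coRange K f = ghost K E e := by
  simp [coRange, mul_sub, ← mul_assoc, ghost_mul_edge, h]

lemma coRange_mul_self : coRange K f * coRange K f = coRange K f := by
  conv_lhs => enter [2]; rw [coRange]
  rw [mul_sub, mul_one, ← mul_assoc, coRange_mul_edge_self, zero_mul, sub_zero]

lemma coRange_add : coRange K f * coRange K f + edge K E f * ghost K E f = 1 := by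
  rw [coRange_mul_self]; simp [coRange]

lemma coRange_mul_vert (u : E.V) : coRange K f * vert K E u = vert K E u * coRange K f := by
  simp only [coRange, sub_mul, mul_sub, mul_assoc, ghost_mul_vert, one_mul, mul_one]
  rw [← mul_assoc, vert_mul_edge]
  by_cases h : u = E.s f
  · simp [h]
  · simp [h, Ne.symm h]

lemma coRange_mul_vert_of_ne {u : E.V} (h : u ≠ E.s f) :
    vert K E u * coRange K f = vert K E u := by
  simp [coRange, mul_sub, ← mul_assoc, vert_mul_edge, h]

lemma sum_edges_ne (u : E.V) (hu : E.IsRegular u) :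
    vert K E u * coRange K f = ∑ e, if e ≠ f ∧ E.s e = u then edge K E e * ghost K E e else 0 := by
  rw [vert_eq_sum u hu, Finset.sum_mul, Finset.sum_filter]
  refine Finset.sum_congr rfl fun e _ => ?_
  by_cases h : e = f
  · subst h; simp [mul_assoc, ghost_self_mul_coRange]
  · simp [h, mul_assoc, ghost_mul_coRange f h]

lemma coRange_of_not_survives {u : E.V} (h : ¬ E.Survives f u) :
    vert K E u * coRange K f = 0 := by
  simp only [FinGraph.Survives, not_or, not_not, not_exists, not_and] at h
  rw [sum_edges_ne f u ⟨f, h.1.symm⟩]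
  refine Finset.sum_eq_zero fun e _ => ?_
  rw [if_neg]
  rintro ⟨h1, h2⟩
  exact h.2 e h1 (h2.trans h.1)

lemma edge_mul_coRange_of_not_survives {e : E.E} (h : ¬ E.Survives f (E.r e)) :
    edge K E e * coRange K f = 0 := by
  rw [← edge_mul_vert_self, mul_assoc, coRange_of_not_survives f h, mul_zero]

lemma coRange_mul_ghost_of_not_survives {e : E.E} (h : ¬ E.Survives f (E.r e)) :
    coRange K f * ghost K E e = 0 := by
  rw [← vert_mul_ghost_self, ← mul_assoc, coRange_mul_vert, coRange_of_not_survives f h, zero_mul]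

/-- The family inside `L_K(E)` realizing the shifted graph. -/
lemma isFamily_shift : IsFamily (E.shift f hf)
    (fun u => vert K E u.1 * coRange K f)
    (Sum.elim (fun e => edge K E e.1 * coRange K f) (fun e => edge K E e.1 * edge K E f))
    (Sum.elim (fun e => coRange K f * ghost K E e.1)
      (fun e => ghost K E f * ghost K E e.1)) := by
  have ne : ∀ {e : E.E}, E.r e = E.s f → e ≠ f := fun h h' => hf ((congrArg E.r h').symm.trans h)
  constructor
  · rintro ⟨v, hv⟩ ⟨w, hw⟩
    have : vert K E v * coRange K f * (vert K E w * coRange K f)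
        = vert K E v * vert K E w * coRange K f := by
      rw [mul_assoc, ← mul_assoc (coRange K f), coRange_mul_vert, mul_assoc (vert K E w),
        coRange_mul_self, mul_assoc]
    simp only [this, vert_mul_vert]
    by_cases h : v = w
    · subst h; simp
    · rw [if_neg h, if_neg fun h' => h (congrArg Subtype.val h'), zero_mul]
  · rintro (⟨e, he⟩ | ⟨e, he⟩)
    · change vert K E (E.s e) * coRange K f * (edge K E e * coRange K f) = edge K E e * coRange K f
      rw [mul_assoc, ← mul_assoc (coRange K f), coRange_mul_edge f he.1, ← mul_assoc,
        vert_mul_edge_self]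
    · change vert K E (E.s e) * coRange K f * (edge K E e * edge K E f) = edge K E e * edge K E f
      rw [mul_assoc, ← mul_assoc (coRange K f), coRange_mul_edge f (ne he), ← mul_assoc,
        vert_mul_edge_self]
  · rintro (⟨e, he⟩ | ⟨e, he⟩)
    · change edge K E e * coRange K f * (vert K E (E.r e) * coRange K f) = edge K E e * coRange K f
      rw [← coRange_mul_vert, mul_assoc, ← mul_assoc (coRange K f), coRange_mul_self,
        coRange_mul_vert, ← mul_assoc, edge_mul_vert_self]
    · change edge K E e * edge K E f * (vert K E (E.r f) * coRange K f) = edge K E e * edge K E f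
      rw [coRange_mul_vert_of_ne f hf, mul_assoc, edge_mul_vert_self]
  · rintro (⟨e, he⟩ | ⟨e, he⟩)
    · change vert K E (E.r e) * coRange K f * (coRange K f * ghost K E e)
        = coRange K f * ghost K E e
      rw [mul_assoc, ← mul_assoc (coRange K f), coRange_mul_self, ← mul_assoc, ← coRange_mul_vert,
        mul_assoc, vert_mul_ghost_self]
    · change vert K E (E.r f) * coRange K f * (ghost K E f * ghost K E e)
        = ghost K E f * ghost K E e
      rw [coRange_mul_vert_of_ne f hf, ← mul_assoc, vert_mul_ghost_self]
  · rintro (⟨e, he⟩ | ⟨e, he⟩)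
    · change coRange K f * ghost K E e * (vert K E (E.s e) * coRange K f)
        = coRange K f * ghost K E e
      rw [mul_assoc, ← mul_assoc (ghost K E e), ghost_mul_vert_self, ghost_mul_coRange f he.1]
    · change ghost K E f * ghost K E e * (vert K E (E.s e) * coRange K f)
        = ghost K E f * ghost K E e
      rw [mul_assoc, ← mul_assoc (ghost K E e), ghost_mul_vert_self, ghost_mul_coRange f (ne he)]
  · rintro (⟨e, he⟩ | ⟨e, he⟩) (⟨e', he'⟩ | ⟨e', he'⟩)
    · simp only [Sum.elim_inl]
      rw [mul_assoc, ← mul_assoc (ghost K E e), ghost_mul_edge]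
      by_cases h : e = e'
      · subst h
        rw [if_pos rfl, if_pos rfl, ← mul_assoc, coRange_mul_vert, mul_assoc, coRange_mul_self]
      · rw [if_neg h, if_neg fun h' => h (congrArg Subtype.val (Sum.inl.inj h')), zero_mul,
          mul_zero]
    · simp only [Sum.elim_inl, Sum.elim_inr, reduceCtorEq, if_false]
      rw [mul_assoc, ← mul_assoc (ghost K E e), ghost_mul_edge]
      split_ifs with h
      · rw [← mul_assoc, coRange_mul_vert, mul_assoc, coRange_mul_edge_self, mul_zero]
      · simp
    · simp only [Sum.elim_inl, Sum.elim_inr, reduceCtorEq, if_false]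
      rw [mul_assoc, ← mul_assoc (ghost K E e), ghost_mul_edge]
      split_ifs with h
      · rw [← coRange_mul_vert, ← mul_assoc, ghost_self_mul_coRange, zero_mul]
      · simp
    · simp only [Sum.elim_inr]
      rw [mul_assoc, ← mul_assoc (ghost K E e), ghost_mul_edge]
      by_cases h : e = e'
      · subst h
        rw [if_pos rfl, if_pos rfl, he, vert_mul_edge_self, ghost_mul_edge, if_pos rfl]
        exact (coRange_mul_vert_of_ne f hf).symm
      · rw [if_neg h, if_neg fun h' => h (congrArg Subtype.val (Sum.inr.inj h')), zero_mul,
          mul_zero]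
  · rintro ⟨u, hu⟩ hreg
    have hreg' : E.IsRegular u := by
      obtain ⟨(⟨e, he⟩ | ⟨e, he⟩), h⟩ := hreg
      · exact ⟨e, congrArg Subtype.val h⟩
      · exact ⟨e, congrArg Subtype.val h⟩
    rw [sum_edges_ne f u hreg', Finset.sum_filter]
    refine Eq.trans ?_ (Fintype.sum_sum_type _).symm
    simp only [Sum.elim_inl, Sum.elim_inr, Subtype.mk.injEq]
    rw [sum_subtype_ite (fun e : E.E => e ≠ f ∧ E.Survives f (E.r e)) (fun e => if E.s e = u then
        edge K E e * coRange K f * (coRange K f * ghost K E e) else 0),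
      sum_subtype_ite (fun e : E.E => E.r e = E.s f) (fun e => if E.s e = u then
        edge K E e * edge K E f * (ghost K E f * ghost K E e) else 0), ← Finset.sum_add_distrib]
    refine Finset.sum_congr rfl fun e _ => ?_
    by_cases hu' : E.s e = u
    swap
    · simp [hu']
    by_cases hef : e = f
    · subst hef; simp [hf]
    have key : edge K E e * ghost K E e = edge K E e * coRange K f * (coRange K f * ghost K E e) +
        edge K E e * edge K E f * (ghost K E f * ghost K E e) := by
      have : edge K E e * (coRange K f * coRange K f + edge K E f * ghost K E f) * ghost K E e
          = edge K E e * ghost K E e := by rw [coRange_add, mul_one]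
      rw [← this]; noncomm_ring
    rw [if_pos ⟨hef, hu'⟩, key]
    congr 1
    · by_cases hs : E.Survives f (E.r e)
      · simp [hef, hs, hu']
      · rw [if_neg (fun h => hs h.2), edge_mul_coRange_of_not_survives f hs, zero_mul]
    · by_cases hr : E.r e = E.s f
      · simp [hr, hu']
      · rw [if_neg hr, edge_mul_edge_of_ne e f hr, zero_mul]

end Shift

end LeavittPathAlgebra

namespace LeavittPathAlgebra

section ShiftInverse

variable (K : Type) [Field K] {E : FinGraph} (f : E.E) (hf : E.r f ≠ E.s f)

/-- The vertex `u` of the shifted graph, read as `0` if it was deleted. -/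
noncomputable def shVert (u : E.V) : LeavittPathAlgebra K (E.shift f hf) :=
  if h : E.Survives f u then vert K (E.shift f hf) ⟨u, h⟩ else 0

/-- The edge `e` of the shifted graph, read as `0` if it was deleted. -/
noncomputable def shEdge (e : E.E) : LeavittPathAlgebra K (E.shift f hf) :=
  if h : e ≠ f ∧ E.Survives f (E.r e) then edge K (E.shift f hf) (Sum.inl ⟨e, h⟩) else 0

/-- The ghost of `shEdge`. -/
noncomputable def shGhost (e : E.E) : LeavittPathAlgebra K (E.shift f hf) :=
  if h : e ≠ f ∧ E.Survives f (E.r e) then ghost K (E.shift f hf) (Sum.inl ⟨e, h⟩) else 0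

/-- The edge of the shifted graph standing for `e f`, read as `0` if `e f` is not a path. -/
noncomputable def shEdge' (e : E.E) : LeavittPathAlgebra K (E.shift f hf) :=
  if h : E.r e = E.s f then edge K (E.shift f hf) (Sum.inr ⟨e, h⟩) else 0

/-- The ghost of `shEdge'`. -/
noncomputable def shGhost' (e : E.E) : LeavittPathAlgebra K (E.shift f hf) :=
  if h : E.r e = E.s f then ghost K (E.shift f hf) (Sum.inr ⟨e, h⟩) else 0

variable {K}

lemma shVert_mul (u w : E.V) :
    shVert K f hf u * shVert K f hf w = if u = w then shVert K f hf u else 0 := by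
  unfold shVert
  by_cases hu : E.Survives f u <;> by_cases hw : E.Survives f w
  · rw [dif_pos hu, dif_pos hw, vert_mul_vert]
    simp only [Subtype.mk.injEq]
  · rw [dif_pos hu, dif_neg hw, if_neg (by rintro rfl; exact hw hu), mul_zero]
  · rw [dif_neg hu]; simp
  · rw [dif_neg hu]; simp

lemma shVert_mul_shEdge (e : E.E) :
    shVert K f hf (E.s e) * shEdge K f hf e = shEdge K f hf e := by
  unfold shEdge
  split_ifs with h
  · have hs : E.Survives f (E.s e) := ((E.shift f hf).s (Sum.inl ⟨e, h⟩)).2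
    rw [shVert, dif_pos hs]
    exact vert_mul_edge_self (G := E.shift f hf) (Sum.inl ⟨e, h⟩)
  · simp

lemma shEdge_mul_shVert (e : E.E) :
    shEdge K f hf e * shVert K f hf (E.r e) = shEdge K f hf e := by
  unfold shEdge
  split_ifs with h
  · rw [shVert, dif_pos h.2]
    exact edge_mul_vert_self (G := E.shift f hf) (Sum.inl ⟨e, h⟩)
  · simp

lemma shVert_mul_shEdge' (e : E.E) :
    shVert K f hf (E.s e) * shEdge' K f hf e = shEdge' K f hf e := by
  unfold shEdge'
  split_ifs with h
  · have hs : E.Survives f (E.s e) := ((E.shift f hf).s (Sum.inr ⟨e, h⟩)).2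
    rw [shVert, dif_pos hs]
    exact vert_mul_edge_self (G := E.shift f hf) (Sum.inr ⟨e, h⟩)
  · simp

lemma shEdge'_mul_shVert (e : E.E) :
    shEdge' K f hf e * shVert K f hf (E.r f) = shEdge' K f hf e := by
  unfold shEdge'
  split_ifs with h
  · rw [shVert, dif_pos (Or.inl hf)]
    exact edge_mul_vert_self (G := E.shift f hf) (Sum.inr ⟨e, h⟩)
  · simp

lemma shGhost_mul_shVert (e : E.E) :
    shGhost K f hf e * shVert K f hf (E.s e) = shGhost K f hf e := by
  unfold shGhost
  split_ifs with h
  · have hs : E.Survives f (E.s e) := ((E.shift f hf).s (Sum.inl ⟨e, h⟩)).2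
    rw [shVert, dif_pos hs]
    exact ghost_mul_vert_self (G := E.shift f hf) (Sum.inl ⟨e, h⟩)
  · simp

lemma shVert_mul_shGhost (e : E.E) :
    shVert K f hf (E.r e) * shGhost K f hf e = shGhost K f hf e := by
  unfold shGhost
  split_ifs with h
  · rw [shVert, dif_pos h.2]
    exact vert_mul_ghost_self (G := E.shift f hf) (Sum.inl ⟨e, h⟩)
  · simp

lemma shGhost'_mul_shVert (e : E.E) :
    shGhost' K f hf e * shVert K f hf (E.s e) = shGhost' K f hf e := by
  unfold shGhost'
  split_ifs with h
  · have hs : E.Survives f (E.s e) := ((E.shift f hf).s (Sum.inr ⟨e, h⟩)).2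
    rw [shVert, dif_pos hs]
    exact ghost_mul_vert_self (G := E.shift f hf) (Sum.inr ⟨e, h⟩)
  · simp

lemma shVert_mul_shGhost' (e : E.E) :
    shVert K f hf (E.r f) * shGhost' K f hf e = shGhost' K f hf e := by
  unfold shGhost'
  split_ifs with h
  · rw [shVert, dif_pos (Or.inl hf)]
    exact vert_mul_ghost_self (G := E.shift f hf) (Sum.inr ⟨e, h⟩)
  · simp

lemma shGhost_mul_shEdge (e e' : E.E) : shGhost K f hf e * shEdge K f hf e' =
    if e = e' then if e = f then 0 else shVert K f hf (E.r e) else 0 := by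
  unfold shGhost shEdge
  by_cases h : e ≠ f ∧ E.Survives f (E.r e)
  · rw [dif_pos h]
    by_cases h' : e' ≠ f ∧ E.Survives f (E.r e')
    · rw [dif_pos h', ghost_mul_edge]
      simp only [Sum.inl.injEq, Subtype.mk.injEq]
      by_cases he : e = e'
      · subst he
        rw [if_pos rfl, if_pos rfl, if_neg h.1, shVert, dif_pos h.2]
        rfl
      · rw [if_neg he, if_neg he]
    · rw [dif_neg h', mul_zero, if_neg (by rintro rfl; exact h' h)]
  · rw [dif_neg h, zero_mul]
    split_ifs with h1 h2
    · rfl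
    · rw [shVert, dif_neg fun h' => h ⟨h2, h'⟩]
    · rfl

lemma shGhost_mul_shEdge' (e e' : E.E) : shGhost K f hf e * shEdge' K f hf e' = 0 := by
  unfold shGhost shEdge'
  split_ifs
  · rw [ghost_mul_edge, if_neg (by simp)]
  all_goals simp

lemma shGhost'_mul_shEdge (e e' : E.E) : shGhost' K f hf e * shEdge K f hf e' = 0 := by
  unfold shGhost' shEdge
  split_ifs
  · rw [ghost_mul_edge, if_neg (by simp)]
  all_goals simp

lemma shGhost'_mul_shEdge' (e e' : E.E) : shGhost' K f hf e * shEdge' K f hf e' =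
    if e = e' then if E.r e = E.s f then shVert K f hf (E.r f) else 0 else 0 := by
  unfold shGhost' shEdge'
  by_cases h : E.r e = E.s f
  · rw [dif_pos h]
    by_cases h' : E.r e' = E.s f
    · rw [dif_pos h', ghost_mul_edge]
      simp only [Sum.inr.injEq, Subtype.mk.injEq]
      by_cases he : e = e'
      · subst he
        rw [if_pos rfl, if_pos rfl, if_pos h, shVert, dif_pos (Or.inl hf)]
        rfl
      · rw [if_neg he, if_neg he]
    · rw [dif_neg h', mul_zero, if_neg (by rintro rfl; exact h' h)]
  · rw [dif_neg h, zero_mul, if_neg h, ite_self]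

lemma shEdge_self : shEdge K f hf f = 0 := by simp [shEdge]

lemma shGhost_self : shGhost K f hf f = 0 := by simp [shGhost]

lemma shEdge'_self : shEdge' K f hf f = 0 := by simp [shEdge', hf]

lemma shGhost'_self : shGhost' K f hf f = 0 := by simp [shGhost', hf]

lemma sh_ck (u : E.V) (hu : E.IsRegular u) : shVert K f hf u =
    ∑ e ∈ Finset.univ.filter (fun e : E.E => E.s e = u),
      (shEdge K f hf e * shGhost K f hf e + shEdge' K f hf e * shGhost' K f hf e) := by
  by_cases hs : E.Survives f u
  · have hreg : (E.shift f hf).IsRegular ⟨u, hs⟩ := by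
      obtain ⟨e, hef, he⟩ : ∃ e, e ≠ f ∧ E.s e = u := by
        by_cases huw : u = E.s f
        · rcases hs with hs | ⟨e, h1, h2⟩
          · exact absurd huw hs
          · exact ⟨e, h1, h2.trans huw.symm⟩
        · obtain ⟨e, he⟩ := hu
          exact ⟨e, by rintro rfl; exact huw he.symm, he⟩
      by_cases hr : E.r e = E.s f
      · exact ⟨Sum.inr ⟨e, hr⟩, Subtype.ext he⟩
      · exact ⟨Sum.inl ⟨e, hef, Or.inl hr⟩, Subtype.ext he⟩
    rw [shVert, dif_pos hs, vert_eq_sum _ hreg, Finset.sum_filter, Finset.sum_filter]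
    refine (Fintype.sum_sum_type _).trans ?_
    simp only [Sum.elim_inl, Sum.elim_inr, Subtype.mk.injEq]
    have h1 : ∀ e : {e : E.E // e ≠ f ∧ E.Survives f (E.r e)},
        edge K (E.shift f hf) (Sum.inl e) * ghost K (E.shift f hf) (Sum.inl e) =
          shEdge K f hf e.1 * shGhost K f hf e.1 := fun e => by
      rw [shEdge, shGhost, dif_pos e.2, dif_pos e.2]
    have h2 : ∀ e : {e : E.E // E.r e = E.s f},
        edge K (E.shift f hf) (Sum.inr e) * ghost K (E.shift f hf) (Sum.inr e) =
          shEdge' K f hf e.1 * shGhost' K f hf e.1 := fun e => by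
      rw [shEdge', shGhost', dif_pos e.2, dif_pos e.2]
    simp only [h1, h2]
    rw [sum_subtype_ite (fun e : E.E => e ≠ f ∧ E.Survives f (E.r e)) (fun e => if E.s e = u then
        shEdge K f hf e * shGhost K f hf e else 0),
      sum_subtype_ite (fun e : E.E => E.r e = E.s f) (fun e => if E.s e = u then
        shEdge' K f hf e * shGhost' K f hf e else 0), ← Finset.sum_add_distrib]
    refine Finset.sum_congr rfl fun e _ => ?_
    by_cases hu' : E.s e = u
    · rw [if_pos hu', if_pos hu', if_pos hu']
      congr 1
      · split_ifs with h
        · rfl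
        · rw [shEdge, dif_neg h, zero_mul]
      · split_ifs with h
        · rfl
        · rw [shEdge', dif_neg h, zero_mul]
    · simp [hu']
  · rw [shVert, dif_neg hs]
    symm
    refine Finset.sum_eq_zero fun e he => ?_
    have : e = f := by
      by_contra h
      simp only [FinGraph.Survives, not_or, not_not, not_exists, not_and] at hs
      exact hs.2 e h ((Finset.mem_filter.mp he).2.trans hs.1)
    rw [this, shEdge_self, shEdge'_self]; simp

/-- With respect to the decomposition `1 = g + f f*`, `g = 1 - f f*`, elements of `L_K(E)` become
`2 × 2` matrices over the algebra of the shifted graph. -/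
lemma isFamily_matrix : IsFamily E
    (fun u => (!![shVert K f hf u, 0; 0, if u = E.s f then shVert K f hf (E.r f) else 0] :
      Matrix (Fin 2) (Fin 2) (LeavittPathAlgebra K (E.shift f hf))))
    (fun e => !![shEdge K f hf e, shEdge' K f hf e;
      if e = f then shVert K f hf (E.r f) else 0, 0])
    (fun e => !![shGhost K f hf e, if e = f then shVert K f hf (E.r f) else 0;
      shGhost' K f hf e, 0]) := by
  constructor
  · intro u w
    rw [Matrix.mul_fin_two]
    simp only [shVert_mul, mul_zero, zero_mul, add_zero, zero_add]
    by_cases h : u = w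
    · subst h
      by_cases h' : u = E.s f <;> simp [h', shVert_mul]
    · rw [if_neg h, if_neg h]
      have : ((if u = E.s f then shVert K f hf (E.r f) else 0) *
        if w = E.s f then shVert K f hf (E.r f) else 0) = 0 := by
        split_ifs with h1 h2
        · exact absurd (h1.trans h2.symm) h
        all_goals simp
      rw [this]
      ext i j; fin_cases i <;> fin_cases j <;> rfl
  · intro e
    rw [Matrix.mul_fin_two]
    simp only [mul_zero, zero_mul, add_zero, zero_add, shVert_mul_shEdge, shVert_mul_shEdge']
    by_cases h : e = f
    · subst h; simp [shVert_mul]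
    · simp [h]
  · intro e
    rw [Matrix.mul_fin_two]
    simp only [mul_zero, zero_mul, add_zero, zero_add, shEdge_mul_shVert]
    have h1 : shEdge' K f hf e * (if E.r e = E.s f then shVert K f hf (E.r f) else 0)
        = shEdge' K f hf e := by
      split_ifs with h
      · exact shEdge'_mul_shVert f hf e
      · rw [shEdge', dif_neg h, zero_mul]
    rw [h1]
    by_cases h : e = f
    · subst h; simp [shVert_mul]
    · simp [h]
  · intro e
    rw [Matrix.mul_fin_two]
    simp only [mul_zero, zero_mul, add_zero, zero_add, shVert_mul_shGhost]
    have h1 : (if E.r e = E.s f then shVert K f hf (E.r f) else 0) * shGhost' K f hf e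
        = shGhost' K f hf e := by
      split_ifs with h
      · exact shVert_mul_shGhost' f hf e
      · rw [shGhost', dif_neg h, mul_zero]
    rw [h1]
    by_cases h : e = f
    · subst h; simp [shVert_mul]
    · simp [h]
  · intro e
    rw [Matrix.mul_fin_two]
    simp only [mul_zero, zero_mul, add_zero, shGhost_mul_shVert, shGhost'_mul_shVert, zero_add]
    by_cases h : e = f
    · subst h; simp [shVert_mul]
    · simp [h]
  · intro e e'
    rw [Matrix.mul_fin_two]
    simp only [mul_zero, zero_mul, add_zero, shGhost_mul_shEdge, shGhost_mul_shEdge',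
      shGhost'_mul_shEdge, shGhost'_mul_shEdge']
    by_cases h : e = e'
    · subst h
      by_cases h' : e = f
      · subst h'; simp [shVert_mul]
      · simp [h']
    · rw [if_neg h, if_neg h, if_neg h]
      have : ((if e = f then shVert K f hf (E.r f) else 0) *
        if e' = f then shVert K f hf (E.r f) else 0) = 0 := by
        split_ifs with h1 h2
        · exact absurd (h1.trans h2.symm) h
        all_goals simp
      rw [this]
      ext i j; fin_cases i <;> fin_cases j <;> simp
  · intro u hu
    have hA : ∀ e, shEdge K f hf e * (if e = f then shVert K f hf (E.r f) else 0) = 0 := by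
      intro e; split_ifs with h
      · rw [h, shEdge_self, zero_mul]
      · simp
    have hA' : ∀ e, (if e = f then shVert K f hf (E.r f) else 0) * shGhost K f hf e = 0 := by
      intro e; split_ifs with h
      · rw [h, shGhost_self, mul_zero]
      · simp
    have hD : ∀ e, (if e = f then shVert K f hf (E.r f) else 0) *
        (if e = f then shVert K f hf (E.r f) else 0)
        = (if e = f then shVert K f hf (E.r f) else 0) := by
      intro e; split_ifs with h
      · rw [shVert_mul, if_pos rfl]
      · simp
    simp only [Matrix.mul_fin_two, hA, hA', hD, mul_zero, zero_mul, add_zero]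
    ext i j
    rw [Matrix.sum_apply]
    fin_cases i <;> fin_cases j
    · simpa using sh_ck f hf u hu
    · simp
    · simp
    · simp [eq_comm]

/-- Shifting an edge `f` passes to the corner of the idempotent `1 - f f*`. -/
lemma exists_shift : ∃ φ : LeavittPathAlgebra K (E.shift f hf) →ₙₐ[K] LeavittPathAlgebra K E,
    Function.Injective φ ∧ Set.range φ = {x | coRange K f * x * coRange K f = x} ∧
      ∀ u, φ (vert K _ u) = vert K E u.1 * coRange K f := by
  obtain ⟨φ, φv, φe, φg⟩ := exists_hom (K := K) (isFamily_shift (K := K) f hf)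
  obtain ⟨ψ, ψv, ψe, ψg⟩ := exists_hom (K := K) (isFamily_matrix (K := K) f hf)
  have hv : ∀ u, φ (shVert K f hf u) = vert K E u * coRange K f := by
    intro u
    unfold shVert
    split_ifs with h
    · exact φv _
    · rw [map_zero, coRange_of_not_survives f h]
  have hr : φ (shVert K f hf (E.r f)) = vert K E (E.r f) := by
    rw [hv, coRange_mul_vert_of_ne f hf]
  have he : ∀ e, e ≠ f → φ (shEdge K f hf e) = edge K E e * coRange K f := by
    intro e hef
    unfold shEdge
    split_ifs with h
    · exact φe _
    · rw [map_zero, edge_mul_coRange_of_not_survives f fun h' => h ⟨hef, h'⟩]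
  have hg : ∀ e, e ≠ f → φ (shGhost K f hf e) = coRange K f * ghost K E e := by
    intro e hef
    unfold shGhost
    split_ifs with h
    · exact φg _
    · rw [map_zero, coRange_mul_ghost_of_not_survives f fun h' => h ⟨hef, h'⟩]
  have he' : ∀ e, φ (shEdge' K f hf e) = edge K E e * edge K E f := by
    intro e
    unfold shEdge'
    split_ifs with h
    · exact φe _
    · rw [map_zero, edge_mul_edge_of_ne _ _ h]
  have hg' : ∀ e, φ (shGhost' K f hf e) = ghost K E f * ghost K E e := by
    intro e
    unfold shGhost'
    split_ifs with h
    · exact φg _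
    · rw [map_zero, ghost_mul_ghost_of_ne _ _ (Ne.symm h)]
  have hff : ψ (edge K E f * ghost K E f) = !![0, 0; 0, shVert K f hf (E.r f)] := by
    rw [map_mul, ψe, ψg, Matrix.mul_fin_two]
    simp only [shEdge_self, shEdge'_self, shGhost_self, shGhost'_self, shVert_mul, if_true,
      mul_zero, zero_mul, add_zero]
  have hsub : ∀ a b c d a' b' c' d' : LeavittPathAlgebra K (E.shift f hf),
      (!![a, b; c, d] : Matrix (Fin 2) (Fin 2) _) - !![a', b'; c', d'] =
        !![a - a', b - b'; c - c', d - d'] := by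
    intros; ext i j; fin_cases i <;> fin_cases j <;> rfl
  have hmul : ∀ a b : LeavittPathAlgebra K (E.shift f hf),
      (!![a, 0; 0, 0] : Matrix (Fin 2) (Fin 2) _) * !![b, 0; 0, 0] = !![a * b, 0; 0, 0] := by
    intro a b; simp only [Matrix.mul_fin_two, mul_zero, zero_mul, add_zero]
  have key1 : ∀ b, ψ (φ b) = !![b, 0; 0, 0] := by
    intro b
    induction b using induction_on with
    | zero => rw [map_zero, map_zero]; ext i j; fin_cases i <;> fin_cases j <;> rfl
    | add a b ha hb => rw [map_add, map_add, ha, hb]; simp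
    | smul k a ha => rw [map_smul, map_smul, ha]; simp
    | mul a b ha hb => rw [map_mul, map_mul, ha, hb, hmul]
    | hv u =>
      obtain ⟨u, hu⟩ := u
      rw [φv, coRange, mul_sub, mul_one, map_sub, map_mul, hff, ψv]
      have hu' : shVert K f hf u = vert K (E.shift f hf) ⟨u, hu⟩ := by rw [shVert, dif_pos hu]
      by_cases h : u = E.s f
      · simp only [Matrix.mul_fin_two, hsub, hu', if_pos h, shVert_mul, if_true, mul_zero,
          zero_mul, add_zero, zero_add, sub_zero, sub_self]
      · simp only [Matrix.mul_fin_two, hsub, hu', if_neg h, mul_zero,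
          zero_mul, add_zero, sub_zero]
    | he e =>
      rcases e with ⟨e, h⟩ | ⟨e, h⟩
      · rw [φe, Sum.elim_inl, coRange, mul_sub, mul_one, map_sub, map_mul _ _ (_ * _), hff, ψe]
        simp only [Matrix.mul_fin_two, hsub, shEdge'_mul_shVert, if_neg h.1, mul_zero, zero_mul, add_zero,
          zero_add, sub_zero, sub_self]
        rw [shEdge, dif_pos h]
      · have : e ≠ f := by rintro rfl; exact hf h
        rw [φe, Sum.elim_inr, map_mul, ψe, ψe]
        simp only [Matrix.mul_fin_two, shEdge_self, shEdge'_self, shEdge'_mul_shVert, if_neg this, if_true,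
          mul_zero, zero_mul, add_zero, zero_add]
        rw [shEdge', dif_pos h]
    | hg e =>
      rcases e with ⟨e, h⟩ | ⟨e, h⟩
      · rw [φg, Sum.elim_inl, coRange, sub_mul, one_mul, map_sub, map_mul _ (_ * _), hff, ψg]
        simp only [Matrix.mul_fin_two, hsub, shVert_mul_shGhost', if_neg h.1, mul_zero, zero_mul, add_zero,
          zero_add, sub_zero, sub_self]
        rw [shGhost, dif_pos h]
      · have : e ≠ f := by rintro rfl; exact hf h
        rw [φg, Sum.elim_inr, map_mul, ψg, ψg]
        simp only [Matrix.mul_fin_two, shGhost_self, shGhost'_self, shVert_mul_shGhost', if_neg this, if_true,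
          mul_zero, zero_mul, add_zero, zero_add]
        rw [shGhost', dif_pos h]
  have key2 : ∀ x i j, φ (ψ x i j) =
      ![coRange K f, ghost K E f] i * x * ![coRange K f, edge K E f] j := by
    intro x
    induction x using induction_on with
    | zero => simp
    | add a b ha hb => intro i j; simp only [map_add, Matrix.add_apply, ha, hb, mul_add, add_mul]
    | smul k a ha =>
      intro i j
      rw [map_smul, Matrix.smul_apply, map_smul, ha, mul_smul_comm, smul_mul_assoc]
    | mul a b ha hb =>
      intro i j
      rw [map_mul, Matrix.mul_apply, map_sum]
      simp only [map_mul, ha, hb, Fin.sum_univ_two]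
      have := coRange_add (K := K) f
      simp only [Matrix.cons_val_zero, Matrix.cons_val_one]
      have h2 : a * b = a * (coRange K f * coRange K f + edge K E f * ghost K E f) * b := by
        rw [this, mul_one]
      rw [h2]
      noncomm_ring
    | hv u =>
      intro i j
      rw [ψv]
      fin_cases i <;> fin_cases j
      · simp [hv, coRange_mul_vert, mul_assoc, coRange_mul_self]
      · simp [coRange_mul_vert, mul_assoc, coRange_mul_edge_self]
      · simp [mul_assoc, ← coRange_mul_vert]
        simp [← mul_assoc, ghost_self_mul_coRange]
      · by_cases h : u = E.s f
        · simp [h, hr, mul_assoc, vert_mul_edge_self, ghost_mul_edge]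
        · simp [h, mul_assoc, vert_mul_edge]
    | he e =>
      intro i j
      rw [ψe]
      by_cases h : e = f
      · subst h
        fin_cases i <;> fin_cases j
        · simp [shEdge_self, coRange_mul_edge_self]
        · simp [shEdge'_self, coRange_mul_edge_self]
        · simp [hr, ghost_mul_edge, coRange_mul_vert_of_ne _ hf]
        · simp [ghost_mul_edge, vert_mul_edge, hf]
      · fin_cases i <;> fin_cases j
        · simp [he e h, coRange_mul_edge f h]
        · simp [he', coRange_mul_edge f h]
        · simp [h, ghost_mul_edge, Ne.symm h]
        · simp [ghost_mul_edge, Ne.symm h]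
    | hg e =>
      intro i j
      rw [ψg]
      by_cases h : e = f
      · subst h
        fin_cases i <;> fin_cases j
        · simp [shGhost_self, mul_assoc, ghost_self_mul_coRange]
        · simp [hr, mul_assoc, ghost_mul_edge, coRange_mul_vert, coRange_mul_vert_of_ne _ hf]
        · simp [shGhost'_self, mul_assoc, ghost_self_mul_coRange]
        · simp [ghost_mul_edge, mul_assoc, ghost_mul_vert, Ne.symm hf]
      · fin_cases i <;> fin_cases j
        · simp [hg e h, mul_assoc, ghost_mul_coRange f h]
        · simp [h, mul_assoc, ghost_mul_edge]
        · simp [hg', mul_assoc, ghost_mul_coRange f h]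
        · simp [ghost_mul_edge, mul_assoc, h]
  refine ⟨φ, ?_, ?_, φv⟩
  · intro a b hab
    have := congrArg (fun M => M 0 0) ((key1 a).symm.trans ((congrArg ψ hab).trans (key1 b)))
    simpa using this
  · ext x
    constructor
    · rintro ⟨b, rfl⟩
      have := key2 (φ b) 0 0
      rw [key1] at this
      exact this.symm
    · intro hx
      exact ⟨ψ x 0 0, (key2 x 0 0).trans hx⟩

end ShiftInverse

end LeavittPathAlgebra

/-! ### Representations with prescribed partial data -/

namespace LeavittPathAlgebra

section LinearAlgebra

variable {K : Type} [Field K]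

/-- If `a` and `b` are generalized inverses of each other and their kernels have the same
dimension, then `a`, restricted to the range of `b`, extends to an isomorphism. -/
lemma exists_equiv_extending {X Y : Type} [AddCommGroup X] [Module K X] [AddCommGroup Y]
    [Module K Y] (a : X →ₗ[K] Y) (b : Y →ₗ[K] X) (haba : ∀ x, a (b (a x)) = a x)
    (hbab : ∀ y, b (a (b y)) = b y)
    (hrank : Module.rank K (LinearMap.ker a) = Module.rank K (LinearMap.ker b)) :
    ∃ Θ : X ≃ₗ[K] Y, ∀ y, Θ (b y) = a (b y) := by
  obtain ⟨κ⟩ := nonempty_linearEquiv_of_rank_eq hrank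
  let pa : X →ₗ[K] LinearMap.ker a := (LinearMap.id - b ∘ₗ a).codRestrict _ (fun x => by
    simp [haba])
  let pb : Y →ₗ[K] LinearMap.ker b := (LinearMap.id - a ∘ₗ b).codRestrict _ (fun x => by
    simp [hbab])
  have hpa : ∀ x, ((pa x : LinearMap.ker a) : X) = x - b (a x) := fun x => rfl
  have hpb : ∀ x, ((pb x : LinearMap.ker b) : Y) = x - a (b x) := fun x => rfl
  have hpab : ∀ y, pa (b y) = 0 := fun y => Subtype.ext (by simp [hpa, hbab])
  have hpba : ∀ y, pb (a y) = 0 := fun y => Subtype.ext (by simp [hpb, haba])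
  have hpaa : ∀ y : LinearMap.ker a, pa y = y := fun y => Subtype.ext (by simp [hpa])
  have hpbb : ∀ y : LinearMap.ker b, pb y = y := fun y => Subtype.ext (by simp [hpb])
  let F : X →ₗ[K] Y := a + (LinearMap.ker b).subtype ∘ₗ κ.toLinearMap ∘ₗ pa
  let G : Y →ₗ[K] X := b + (LinearMap.ker a).subtype ∘ₗ κ.symm.toLinearMap ∘ₗ pb
  have hF : ∀ x, F x = a x + (κ (pa x) : Y) := fun x => rfl
  have hG : ∀ x, G x = b x + (κ.symm (pb x) : X) := fun x => rfl
  refine ⟨LinearEquiv.ofLinearMap F G ?_ ?_, ?_⟩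
  · ext y
    simp [hF, hG, hpab, hpaa, hpb]
  · ext y
    simp [hF, hG, hpba, hpbb, hpa]
  · intro y
    change F (b y) = a (b y)
    rw [hF, hpab]; simp

/-- Operators `a i`, `b i` on `Q` satisfying part of the relations for the edges and ghost edges at
a vertex extend, after enlarging `Q` by an infinite-dimensional space, to operators satisfying all
of them. -/
lemma exists_operators {ι Q : Type} [Fintype ι] [DecidableEq ι] [Nonempty ι] [AddCommGroup Q]
    [Module K Q] (a b : ι → Module.End K Q) (haba : ∀ i q, a i (b i (a i q)) = a i q)
    (hbab : ∀ i q, b i (a i (b i q)) = b i q) (hba : ∀ i j q, i ≠ j → b i (a j q) = 0) :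
    ∃ T U : ι → Module.End K (Q × (ℕ →₀ (K × Q))),
      (∀ i j, U i * T j = if i = j then 1 else 0) ∧ ∑ i, T i * U i = 1 ∧
      ∀ i q, T i (b i q, 0) = (a i (b i q), 0) := by
  set N := (ℕ →₀ (K × Q))
  let A : (ι → Q × N) →ₗ[K] Q × N :=
    LinearMap.inl K Q N ∘ₗ ∑ i, a i ∘ₗ LinearMap.fst K Q N ∘ₗ LinearMap.proj i
  let B : Q × N →ₗ[K] (ι → Q × N) :=
    LinearMap.pi fun i => LinearMap.inl K Q N ∘ₗ b i ∘ₗ LinearMap.fst K Q N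
  have hA : ∀ x, A x = (∑ i, a i (x i).1, 0) := fun x => by simp [A]
  have hB : ∀ x i, B x i = (b i x.1, 0) := fun x i => by simp [B]
  have hbs : ∀ i (x : ι → Q), b i (∑ j, a j (x j)) = b i (a i (x i)) := by
    intro i x
    rw [map_sum, Finset.sum_eq_single i]
    · intro j _ hj; exact hba i j _ (Ne.symm hj)
    · simp
  have hκ : Cardinal.aleph0 ≤ Module.rank K N := by
    rw [rank_finsupp', rank_prod', Module.rank_self, Cardinal.mk_nat]
    exact le_mul_of_one_le_right' le_self_add
  have hQκ : Module.rank K Q ≤ Module.rank K N := by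
    rw [rank_finsupp', rank_prod', Module.rank_self, Cardinal.mk_nat]
    calc Module.rank K Q ≤ 1 + Module.rank K Q := le_add_self
      _ ≤ _ := le_mul_of_one_le_left' Cardinal.one_le_aleph0
  have hW : Module.rank K (Q × N) = Module.rank K N := by
    rw [rank_prod', Cardinal.add_eq_right hκ hQκ]
  have hX : Module.rank K (ι → Q × N) = Module.rank K N := by
    rw [rank_fun_eq_lift_mul, hW, Cardinal.lift_id]
    exact Cardinal.mul_eq_right hκ ((Cardinal.natCast_lt_aleph0).le.trans hκ) (by simp)
  have hkA : Module.rank K (LinearMap.ker A) = Module.rank K N := by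
    refine le_antisymm ((Submodule.rank_le _).trans hX.le) ?_
    obtain ⟨i⟩ := ‹Nonempty ι›
    refine LinearMap.rank_le_of_injective
      ((LinearMap.single K (fun _ => Q × N) i ∘ₗ LinearMap.inr K Q N).codRestrict
        (LinearMap.ker A) ?_) ?_
    · intro n
      rw [LinearMap.mem_ker, hA]
      have : ∀ j, ((Pi.single i ((0, n) : Q × N) : ι → Q × N) j).1 = 0 := by
        intro j; by_cases h : j = i
        · subst h; simp
        · simp [h]
      simp [this]
    · intro n m h
      have := congrArg (fun z => ((z : LinearMap.ker A) : ι → Q × N) i) h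
      simpa using this
  have hkB : Module.rank K (LinearMap.ker B) = Module.rank K N := by
    refine le_antisymm ((Submodule.rank_le _).trans hW.le) ?_
    refine LinearMap.rank_le_of_injective
      ((LinearMap.inr K Q N).codRestrict (LinearMap.ker B) ?_) ?_
    · intro n
      rw [LinearMap.mem_ker]
      ext1 i; simp [hB]
    · intro n m h
      have := congrArg (fun z => ((z : LinearMap.ker B) : Q × N)) h
      simpa using this
  obtain ⟨Θ, hΘ⟩ := exists_equiv_extending A B
    (fun x => by
      simp only [hA, hB, hbs, haba])
    (fun y => by
      ext1 i
      simp only [hA, hB, hbs, hbab])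
    (hkA.trans hkB.symm)
  refine ⟨fun i => Θ.toLinearMap ∘ₗ LinearMap.single K (fun _ => Q × N) i,
    fun i => LinearMap.proj i ∘ₗ Θ.symm.toLinearMap, ?_, ?_, ?_⟩
  · intro i j
    refine LinearMap.ext fun w => ?_
    by_cases h : i = j
    · subst h; simp
    · simp [h]
  · refine LinearMap.ext fun w => ?_
    rw [LinearMap.sum_apply]
    simp only [Module.End.mul_apply, LinearMap.comp_apply, LinearEquiv.coe_coe,
      Module.End.one_apply]
    rw [← map_sum]
    conv_rhs => rw [← Θ.apply_symm_apply w]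
    congr 1
    ext1 i
    simp [LinearMap.single_apply, Finset.sum_apply, Pi.single_apply]
  · intro i q
    have h1 : (LinearMap.single K (fun _ => Q × N) i) (b i q, 0) = B (a i (b i q), 0) := by
      ext1 j
      rw [hB]
      by_cases h : j = i
      · subst h; simp [hbab]
      · simp [h, hba j i _ h, Prod.zero_eq_mk]
    simp only [LinearMap.comp_apply, LinearEquiv.coe_coe]
    rw [h1, hΘ, hA]
    simp only [hB]
    congr 1
    rw [Finset.sum_eq_single i]
    · simp [hbab]
    · intro j _ hj; rw [hba j i _ hj, map_zero]
    · simp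

end LinearAlgebra

variable {K : Type} [Field K] {G : FinGraph}

/-- Operators on `Q` satisfying part of the relations for edges and ghost edges extend to a
representation of `L_K(G)` on `V → W` for some larger space `W`. -/
lemma exists_rep {Q : Type} [AddCommGroup Q] [Module K Q] (a b : G.E → Module.End K Q)
    (haba : ∀ i q, a i (b i (a i q)) = a i q) (hbab : ∀ i q, b i (a i (b i q)) = b i q)
    (hba : ∀ i j q, i ≠ j → G.s i = G.s j → b i (a j q) = 0) :
    ∃ (W : Type) (_ : AddCommGroup W) (_ : Module K W) (j : Q →ₗ[K] W)
      (ρ : LeavittPathAlgebra K G →ₐ[K] Module.End K (G.V → W)),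
      Function.Injective j ∧ (∀ v x, ρ (vert K G v) x = Pi.single v (x v)) ∧
      ∀ e q, ρ (edge K G e) (Pi.single (G.r e) (j (b e q))) =
        Pi.single (G.s e) (j (a e (b e q))) := by
  have hex : ∀ v, ∃ T U : G.E → Module.End K (Q × (ℕ →₀ (K × Q))), G.IsRegular v →
      (∀ e f, G.s e = v → G.s f = v → U e * T f = if e = f then 1 else 0) ∧
      ∑ e ∈ Finset.univ.filter (fun e => G.s e = v), T e * U e = 1 ∧
      ∀ e, G.s e = v → ∀ q, T e (b e q, 0) = (a e (b e q), 0) := by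
    intro v
    by_cases hv : G.IsRegular v
    · obtain ⟨e0, he0⟩ := hv
      have : Nonempty {e : G.E // G.s e = v} := ⟨⟨e0, he0⟩⟩
      obtain ⟨T, U, h1, h2, h3⟩ := exists_operators (fun e : {e : G.E // G.s e = v} => a e.1)
        (fun e => b e.1) (fun e => haba e.1) (fun e => hbab e.1)
        (fun e f q h => hba e.1 f.1 q (fun h' => h (Subtype.ext h')) (e.2.trans f.2.symm))
      refine ⟨fun e => if h : G.s e = v then T ⟨e, h⟩ else 0,
        fun e => if h : G.s e = v then U ⟨e, h⟩ else 0, fun _ => ⟨?_, ?_, ?_⟩⟩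
      · intro e f he hf
        simp only [dif_pos he, dif_pos hf, h1, Subtype.mk.injEq]
      · rw [← h2, Finset.sum_subtype (p := fun e => G.s e = v) _ (by simp)]
        exact Finset.sum_congr rfl fun e _ => by simp only [dif_pos e.2]
      · intro e he q
        simp only [dif_pos he]
        exact h3 ⟨e, he⟩ q
    · exact ⟨0, 0, fun h => absurd h hv⟩
  choose T U hTU using hex
  set W := Q × (ℕ →₀ (K × Q))
  let P : G.V → Module.End K (G.V → W) := fun v =>
    LinearMap.single K (fun _ => W) v ∘ₗ LinearMap.proj v
  let x : G.E → Module.End K (G.V → W) := fun e =>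
    LinearMap.single K (fun _ => W) (G.s e) ∘ₗ T (G.s e) e ∘ₗ LinearMap.proj (G.r e)
  let y : G.E → Module.End K (G.V → W) := fun e =>
    LinearMap.single K (fun _ => W) (G.r e) ∘ₗ U (G.s e) e ∘ₗ LinearMap.proj (G.s e)
  have hP : ∀ v z, P v z = Pi.single v (z v) := fun _ _ => rfl
  have hx : ∀ e z, x e z = Pi.single (G.s e) (T (G.s e) e (z (G.r e))) := fun _ _ => rfl
  have hy : ∀ e z, y e z = Pi.single (G.r e) (U (G.s e) e (z (G.s e))) := fun _ _ => rfl
  have hreg : ∀ e, G.IsRegular (G.s e) := fun e => ⟨e, rfl⟩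
  have hfam : IsFamily G P x y := by
    constructor
    · intro v w
      refine LinearMap.ext fun z => ?_
      by_cases h : v = w
      · subst h; simp [hP]
      · simp [hP, h]
    · intro e; refine LinearMap.ext fun z => ?_; simp [hP, hx]
    · intro e; refine LinearMap.ext fun z => ?_; simp [hP, hx]
    · intro e; refine LinearMap.ext fun z => ?_; simp [hP, hy]
    · intro e; refine LinearMap.ext fun z => ?_; simp [hP, hy]
    · intro e f
      refine LinearMap.ext fun z => ?_
      rw [Module.End.mul_apply, hx, hy]
      by_cases hs : G.s f = G.s e
      · rw [hs, Pi.single_eq_same, ← Module.End.mul_apply,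
          (hTU _ (hreg e)).1 e f rfl hs]
        by_cases h : e = f
        · subst h; simp [hP]
        · simp [h]
      · have h : e ≠ f := by rintro rfl; exact hs rfl
        simp [h, Pi.single_eq_of_ne (Ne.symm hs)]
    · intro v hv
      refine LinearMap.ext fun z => ?_
      rw [LinearMap.sum_apply, hP]
      have h1 : ∀ e ∈ Finset.univ.filter (fun e => G.s e = v),
          (x e * y e) z = Pi.single v ((T v e * U v e) (z v)) := by
        intro e he
        obtain rfl := (Finset.mem_filter.mp he).2
        rw [Module.End.mul_apply, hx, hy, Pi.single_eq_same]; rfl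
      rw [Finset.sum_congr rfl h1]
      have h2 := map_sum (LinearMap.single K (fun _ => W) v)
        (fun e => (T v e * U v e) (z v)) (Finset.univ.filter (fun e => G.s e = v))
      refine Eq.trans ?_ h2
      rw [← LinearMap.sum_apply, (hTU v hv).2.1]; rfl
  obtain ⟨ρ, ρv, ρe, -⟩ := exists_algHom (K := K) hfam (by
    refine LinearMap.ext fun z => ?_
    rw [LinearMap.sum_apply]
    ext1 v
    simp [hP, Finset.sum_apply, Pi.single_apply])
  refine ⟨W, inferInstance, inferInstance, LinearMap.inl K _ _, ρ, LinearMap.inl_injective,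
    fun v x => by rw [ρv, hP], fun e q => ?_⟩
  rw [ρe, hx, Pi.single_eq_same]
  congr 1
  exact (hTU _ (hreg e)).2.2 e rfl q

end LeavittPathAlgebra

/-! ### Paths and the path algebra -/

namespace FinGraph

/-- The word `l`, read from right to left, is a path from `u` to `v`: the head of the list is the
last edge of the path. -/
def IsPath (G : FinGraph) (u : G.V) : List G.E → G.V → Prop
  | [], v => u = v
  | e :: l, v => G.r e = v ∧ G.IsPath u l (G.s e)

/-- The word `l`, read from right to left, is a path ending in `v`. -/
def EndsAt (G : FinGraph) (l : List G.E) (v : G.V) : Prop := ∃ u, G.IsPath u l v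

variable {G : FinGraph}

lemma isPath_append {u w : G.V} {l l' : List G.E} :
    G.IsPath u (l' ++ l) w ↔ ∃ v, G.IsPath u l v ∧ G.IsPath v l' w := by
  induction l' generalizing w with
  | nil =>
    constructor
    · intro h; exact ⟨w, h, rfl⟩
    · rintro ⟨v, h, h'⟩; cases h'; exact h
  | cons e l' ih =>
    constructor
    · rintro ⟨h1, h2⟩
      obtain ⟨v, h3, h4⟩ := ih.mp h2
      exact ⟨v, h3, h1, h4⟩
    · rintro ⟨v, h1, h2, h3⟩
      exact ⟨h2, ih.mpr ⟨v, h1, h3⟩⟩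

lemma IsPath.source_unique {u u' v : G.V} {l : List G.E} (h : G.IsPath u l v)
    (h' : G.IsPath u' l v) : u = u' := by
  induction l generalizing v with
  | nil => exact Eq.trans (show u = v from h) (show u' = v from h').symm
  | cons e l ih => exact ih h.2 h'.2

/-- A path from `u'` to `v` through a suffix `γ` starting in `w` restricts to a path to `w`. -/
lemma IsPath.of_append {u w v : G.V} {l γ : List G.E} (h : G.IsPath u (γ ++ l) v)
    (hγ : G.IsPath w γ v) : G.IsPath u l w := by
  obtain ⟨w', h1, h2⟩ := isPath_append.mp h
  rwa [← h2.source_unique hγ]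

end FinGraph

namespace LeavittPathAlgebra

open FinGraph

section Words

variable {K : Type} [Field K] {ι : Type}

/-- Words in the letters `ι`, written from right to left, with coefficients: the underlying space
of the free algebra. -/
abbrev Words (K ι : Type) [Field K] : Type := List ι →₀ K

/-- The product `y x` of the free algebra; words being written from right to left, the word of a
product is the concatenation in the opposite order. -/
noncomputable def wmul (y : Words K ι) : Words K ι →ₗ[K] Words K ι :=
  Finsupp.lsum K fun l => LinearMap.toSpanSingleton K _ (y.mapDomain (l ++ ·))

lemma wmul_single (y : Words K ι) (l : List ι) (c : K) :
    wmul y (Finsupp.single l c) = c • y.mapDomain (l ++ ·) := by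
  simp [wmul]

lemma wmul_zero_left (x : Words K ι) : wmul (0 : Words K ι) x = 0 := by
  induction x using Finsupp.induction_linear with
  | zero => simp
  | add a b ha hb => simp [ha, hb]
  | single l c => simp [wmul_single]

/-- Cancelling the word `γ` on the right of `y`; words not ending in `γ` are sent to `0`. -/
noncomputable def strip (γ : List ι) : Words K ι →ₗ[K] Words K ι :=
  Finsupp.lcomapDomain (γ ++ ·) (List.append_right_injective γ)

@[simp]
lemma strip_apply (γ : List ι) (y : Words K ι) (l : List ι) : strip γ y l = y (γ ++ l) := rfl

lemma strip_cons (e : ι) (γ : List ι) (y : Words K ι) : strip (e :: γ) y = strip γ (strip [e] y) := by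
  ext l; simp

lemma strip_nil (y : Words K ι) : strip [] y = y := by
  ext l; simp

lemma mapDomain_cons_nil (e : ι) (l : List ι) (y : Words K ι) :
    y.mapDomain (e :: l ++ ·) [] = 0 := by
  refine Finsupp.mapDomain_of_notMem_range _ _ ?_
  rintro ⟨m, hm⟩
  simp at hm

lemma strip_mapDomain (e f : ι) (l : List ι) (y : Words K ι) [Decidable (e = f)] :
    strip [e] (y.mapDomain (f :: l ++ ·)) = if e = f then y.mapDomain (l ++ ·) else 0 := by
  induction y using Finsupp.induction_linear with
  | zero => simp
  | add a b ha hb =>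
    rw [Finsupp.mapDomain_add, map_add, ha, hb, Finsupp.mapDomain_add]
    split_ifs <;> simp
  | single m c =>
    classical
    rw [Finsupp.mapDomain_single, Finsupp.mapDomain_single]
    ext p
    by_cases h : e = f
    · subst h; simp [Finsupp.single_apply]
    · simp [h]

/-- The Leibniz-type rule for removing the last letter of a product. -/
lemma strip_wmul (e : ι) (y x : Words K ι) :
    strip [e] (wmul y x) = wmul y (strip [e] x) + x [] • strip [e] y := by
  classical
  induction x using Finsupp.induction_linear with
  | zero => simp
  | add a b ha hb =>
    rw [map_add, map_add, ha, hb, map_add, map_add, Finsupp.add_apply, add_smul]; abel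
  | single l c =>
    rw [wmul_single, map_smul]
    cases l with
    | nil =>
      have h1 : strip [e] (Finsupp.single [] c : Words K ι) = 0 := by
        ext p; simp
      have h2 : y.mapDomain (([] : List ι) ++ ·) = y := Finsupp.mapDomain_id
      rw [h1, h2]; simp
    | cons f l =>
      have h1 : strip [e] (Finsupp.single (f :: l) c : Words K ι) =
          if e = f then Finsupp.single l c else 0 := by
        ext p
        by_cases h : e = f
        · subst h; simp [Finsupp.single_apply]
        · simp [h]
      rw [h1, strip_mapDomain, Finsupp.single_eq_of_ne (by simp)]
      split_ifs
      · simp [wmul_single]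
      · simp

/-- Cancelling `γ` on the right of `y x` or of `x` alone gives the same result up to terms of
small length. -/
lemma strip_wmul_sub (γ : List ι) (y : Words K ι) (d n : ℕ) (hy : ∀ l, y l ≠ 0 → l.length < d)
    (x : Words K ι) (hx : ∀ l, x l ≠ 0 → l.length < γ.length → d + l.length ≤ n + γ.length)
    (l : List ι) (hl : (strip γ (wmul y x) - wmul y (strip γ x)) l ≠ 0) : l.length < n := by
  induction γ generalizing x l with
  | nil => simp [strip_nil] at hl
  | cons e γ ih =>
    rw [strip_cons e γ (wmul y x), strip_cons e γ x, strip_wmul, map_add, map_smul, add_sub_right_comm,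
      Finsupp.add_apply] at hl
    by_cases h1 : (strip γ (wmul y (strip [e] x)) - wmul y (strip γ (strip [e] x))) l = 0
    · rw [h1, zero_add, Finsupp.smul_apply, smul_eq_mul] at hl
      have h2 := hx [] (left_ne_zero_of_mul hl) (by simp)
      have h3 := hy (e :: γ ++ l) (by simpa using right_ne_zero_of_mul hl)
      simp at h2 h3
      omega
    · refine ih (strip [e] x) (fun l' hl' hlen => ?_) l h1
      have := hx (e :: l') (by simpa using hl') (by simpa using hlen)
      simp at this
      omega

end Words

section Theta

variable {K : Type} [Field K] {G : FinGraph}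

/-- The product in `L_K(G)` of the edges of a word. -/
noncomputable def word (K : Type) [Field K] (G : FinGraph) : List G.E → LeavittPathAlgebra K G
  | [] => 1
  | e :: l => word K G l * edge K G e

lemma word_append (l l' : List G.E) : word K G (l' ++ l) = word K G l * word K G l' := by
  induction l' with
  | nil => simp [word]
  | cons e l' ih => simp [word, ih, mul_assoc]

/-- Evaluation of the free algebra on the edges in `L_K(G)`. -/
noncomputable def eval (K : Type) [Field K] (G : FinGraph) :
    Words K G.E →ₗ[K] LeavittPathAlgebra K G :=
  Finsupp.linearCombination K (word K G)

lemma eval_single (l : List G.E) (c : K) : eval K G (Finsupp.single l c) = c • word K G l := by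
  simp [eval]

lemma eval_wmul (y x : Words K G.E) : eval K G (wmul y x) = eval K G y * eval K G x := by
  induction x using Finsupp.induction_linear with
  | zero => simp
  | add a b ha hb => simp [ha, hb, mul_add]
  | single l c =>
    rw [wmul_single, map_smul, eval_single, mul_smul_comm]
    congr 1
    induction y using Finsupp.induction_linear with
    | zero => simp
    | add a b ha hb => rw [Finsupp.mapDomain_add, map_add, map_add, add_mul, ha, hb]
    | single m d =>
      rw [Finsupp.mapDomain_single, eval_single, eval_single, word_append, smul_mul_assoc]

/-- Words with coefficients supported on the paths from `u` to `v`. -/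
def pathsFromTo (K : Type) [Field K] (G : FinGraph) (u v : G.V) : Submodule K (Words K G.E) :=
  Finsupp.supported K K {l | G.IsPath u l v}

/-- Words with coefficients supported on the paths ending in `v`. -/
def pathsTo (K : Type) [Field K] (G : FinGraph) (v : G.V) : Submodule K (Words K G.E) :=
  Finsupp.supported K K {l | G.EndsAt l v}

lemma mem_supported_iff {S : Set (List G.E)} {x : Words K G.E} :
    x ∈ Finsupp.supported K K S ↔ ∀ l, x l ≠ 0 → l ∈ S := by
  rw [Finsupp.mem_supported]
  constructor
  · intro h l hl; exact h (by simpa using hl)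
  · intro h l hl; exact h l (by simpa using hl)

lemma wmul_mem {u v : G.V} {y x : Words K G.E} (hy : y ∈ pathsTo K G u)
    (hx : x ∈ pathsFromTo K G u v) : wmul y x ∈ pathsTo K G v := by
  have hx' := mem_supported_iff.mp hx
  rw [← x.sum_single, Finsupp.sum, map_sum]
  refine Submodule.sum_mem _ fun l hl => ?_
  rw [wmul_single]
  refine Submodule.smul_mem _ _ ?_
  have hl' := hx' l (by simpa using hl)
  have hy' := mem_supported_iff.mp hy
  rw [Finsupp.mapDomain, Finsupp.sum]
  refine Submodule.sum_mem _ fun m hm => Finsupp.single_mem_supported K _ ?_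
  obtain ⟨w, hw⟩ := hy' m (by simpa using hm)
  exact ⟨w, isPath_append.mpr ⟨u, hw, hl'⟩⟩

lemma strip_mem {u w v : G.V} {x : Words K G.E} {γ : List G.E} (hx : x ∈ pathsFromTo K G u v)
    (hγ : G.IsPath w γ v) : strip γ x ∈ pathsFromTo K G u w :=
  mem_supported_iff.mpr fun l hl => (mem_supported_iff.mp hx (γ ++ l) (by simpa using hl)).of_append hγ

lemma vert_mul_word {u v : G.V} {l : List G.E} (h : G.IsPath u l v) (w : G.V) :
    vert K G w * (word K G l * vert K G v) = if w = u then word K G l * vert K G v else 0 := by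
  induction l generalizing v with
  | nil =>
    obtain rfl : u = v := h
    simp only [word, one_mul, vert_mul_vert]
    split_ifs with h
    · rw [h]
    · rfl
  | cons e l ih =>
    have h2 := ih h.2
    simp only [word]
    rw [mul_assoc (word K G l), edge_mul_vert, if_pos h.1, ← vert_mul_edge_self e,
      ← mul_assoc (word K G l), ← mul_assoc, h2]
    split_ifs <;> simp

lemma vert_mul_eval {u v : G.V} {x : Words K G.E} (h : x ∈ pathsFromTo K G u v) :
    vert K G u * (eval K G x * vert K G v) = eval K G x * vert K G v := by
  have h' := mem_supported_iff.mp h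
  rw [← x.sum_single, Finsupp.sum, map_sum, Finset.sum_mul, Finset.mul_sum]
  refine Finset.sum_congr rfl fun l hl => ?_
  rw [eval_single, smul_mul_assoc, mul_smul_comm, vert_mul_word (h' l (by simpa using hl)),
    if_pos rfl]

/-- Distinct paths ending in `v` are linearly independent in `L_K(G)`. -/
lemma eval_injective {v : G.V} {x : Words K G.E} (hx : x ∈ pathsTo K G v)
    (h0 : eval K G x * vert K G v = 0) : x = 0 := by
  classical
  have inj : ∀ e : G.E, Function.Injective (e :: · : List G.E → List G.E) :=
    fun e => List.cons_injective
  -- edges act on words by adding a letter, ghost edges by removing it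
  obtain ⟨W, _, _, j, ρ, hj, hρv, hρe⟩ := exists_rep (K := K) (G := G) (Q := Words K G.E)
    (fun e => Finsupp.lmapDomain K K (e :: ·)) (fun e => strip [e])
    (fun e q => by
      congr 1; ext l
      simp [Finsupp.mapDomain_apply (inj e)])
    (fun e q => by
      ext l
      simp [Finsupp.mapDomain_apply (inj e)])
    (fun e f q hef _ => by
      ext l
      simp only [strip_apply, Finsupp.lmapDomain_apply]
      refine Finsupp.mapDomain_of_notMem_range _ _ ?_
      rintro ⟨m, hm⟩
      simp at hm
      exact hef hm.1.symm)
  have hρe' : ∀ e q, ρ (edge K G e) (Pi.single (G.r e) (j q)) =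
      Pi.single (G.s e) (j (Finsupp.lmapDomain K K (e :: ·) q)) := by
    intro e q
    have h1 : strip [e] (Finsupp.lmapDomain K K (e :: ·) q) = q := by
      ext l
      simp [Finsupp.mapDomain_apply (inj e)]
    have := hρe e (Finsupp.lmapDomain K K (e :: ·) q)
    rwa [h1] at this
  have key : ∀ (l : List G.E) (u v : G.V) (m : List G.E), G.IsPath u l v →
      ρ (word K G l) (Pi.single v (j (Finsupp.single m 1))) =
        Pi.single u (j (Finsupp.single (l.reverse ++ m) 1)) := by
    intro l
    induction l with
    | nil => intro u v m h; obtain rfl : u = v := h; simp [word]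
    | cons e l ih =>
      intro u v m h
      obtain ⟨rfl, h2⟩ := h
      rw [word, map_mul, Module.End.mul_apply, hρe', Finsupp.lmapDomain_apply,
        Finsupp.mapDomain_single, ih _ _ _ h2]
      simp
  obtain ⟨S, hS⟩ : ∃ S : (G.V → W) →ₗ[K] W, ∀ u w, S (Pi.single u w) = w :=
    ⟨∑ u, LinearMap.proj u, fun u w => by simp [LinearMap.sum_apply]⟩
  have h1 : S (ρ (eval K G x * vert K G v) (Pi.single v (j (Finsupp.single [] 1)))) =
      j (x.mapDomain List.reverse) := by
    rw [map_mul, Module.End.mul_apply, hρv, Pi.single_eq_same, eval,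
      Finsupp.linearCombination_apply, Finsupp.sum, map_sum, LinearMap.sum_apply, map_sum,
      Finsupp.mapDomain, Finsupp.sum, map_sum]
    refine Finset.sum_congr rfl fun l hl => ?_
    obtain ⟨u, hu⟩ := mem_supported_iff.mp hx l (by simpa using hl)
    rw [map_smul, LinearMap.smul_apply, key l u v [] hu, map_smul, hS, ← map_smul]
    simp
  rw [h0, map_zero, LinearMap.zero_apply, map_zero] at h1
  have h2 : x.mapDomain List.reverse = 0 := hj (h1.symm.trans (map_zero j).symm)
  exact Finsupp.mapDomain_injective List.reverse_injective (h2.trans Finsupp.mapDomain_zero.symm)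

end Theta

end LeavittPathAlgebra

/-! ### Long paths -/

namespace LeavittPathAlgebra

open FinGraph

section Deep

variable {K : Type} [Field K] {G : FinGraph}

/-- The span of the paths ending in `v` of length at least `m`; if `v` is a sink, the bound on the
length is waived. -/
def deep (K : Type) [Field K] (G : FinGraph) (m : ℕ) (v : G.V) :
    Submodule K (LeavittPathAlgebra K G) :=
  Submodule.span K {β | ∃ l, G.EndsAt l v ∧ (m ≤ l.length ∨ G.IsSink v) ∧
    β = word K G l * vert K G v}

lemma deep_anti {m n : ℕ} (h : m ≤ n) (v : G.V) : deep K G n v ≤ deep K G m v := by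
  refine Submodule.span_mono ?_
  rintro β ⟨l, h1, h2, h3⟩
  exact ⟨l, h1, h2.imp h.trans id, h3⟩

/-- It suffices to check that left multiplication maps one `deep` space to another on paths. -/
lemma mul_mem_deep {m n : ℕ} {v : G.V} {x : LeavittPathAlgebra K G}
    (h : ∀ l u, G.IsPath u l v → (m ≤ l.length ∨ G.IsSink v) →
      x * (word K G l * vert K G v) ∈ deep K G n v) :
    ∀ β ∈ deep K G m v, x * β ∈ deep K G n v := by
  intro β hβ
  induction hβ using Submodule.span_induction with
  | mem β hβ => obtain ⟨l, ⟨u, h1⟩, h2, rfl⟩ := hβ; exact h l u h1 h2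
  | zero => simp
  | add a b _ _ ha hb => rw [mul_add]; exact add_mem ha hb
  | smul c a _ ha => rw [mul_smul_comm]; exact Submodule.smul_mem _ _ ha

/-- Left multiplication by a fixed element of `L_K(G)` sends sufficiently long paths to
combinations of paths, without ghost edges. -/
lemma exists_mul_mem_deep (x : LeavittPathAlgebra K G) :
    ∃ n, ∀ m v, ∀ β ∈ deep K G (m + n) v, x * β ∈ deep K G m v := by
  induction x using induction_on with
  | zero => exact ⟨0, fun m v β _ => by simp⟩
  | add a b ha hb =>
    obtain ⟨n₁, h₁⟩ := ha
    obtain ⟨n₂, h₂⟩ := hb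
    refine ⟨n₁ + n₂, fun m v β hβ => ?_⟩
    rw [add_mul]
    exact add_mem (h₁ m v β (deep_anti (by omega) v hβ)) (h₂ m v β (deep_anti (by omega) v hβ))
  | smul k a ha =>
    obtain ⟨n, h⟩ := ha
    refine ⟨n, fun m v β hβ => ?_⟩
    rw [smul_mul_assoc]
    exact Submodule.smul_mem _ _ (h m v β hβ)
  | mul a b ha hb =>
    obtain ⟨n₁, h₁⟩ := ha
    obtain ⟨n₂, h₂⟩ := hb
    refine ⟨n₁ + n₂, fun m v β hβ => ?_⟩
    rw [mul_assoc]
    exact h₁ m v _ (h₂ (m + n₁) v β (by rwa [add_assoc]))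
  | hv w =>
    refine ⟨0, fun m v => mul_mem_deep fun l u hu hl => ?_⟩
    rw [vert_mul_word hu]
    split_ifs
    · exact Submodule.subset_span ⟨l, ⟨u, hu⟩, hl, rfl⟩
    · exact zero_mem _
  | he e =>
    refine ⟨0, fun m v => mul_mem_deep fun l u hu hl => ?_⟩
    rw [← edge_mul_vert_self, mul_assoc, vert_mul_word hu]
    split_ifs with h
    · refine Submodule.subset_span ⟨l ++ [e], ⟨G.s e, isPath_append.mpr ⟨u, ⟨h, rfl⟩, hu⟩⟩, ?_, ?_⟩
      · exact hl.imp (fun h => by simp; omega) id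
      · simp [word_append, word, mul_assoc]
    · simp
  | hg e =>
    refine ⟨1, fun m v => mul_mem_deep fun l u hu hl => ?_⟩
    rcases List.eq_nil_or_concat l with rfl | ⟨l', f, rfl⟩
    · have hs : G.IsSink v := hl.resolve_left (by simp)
      rw [word, one_mul, ghost_mul_vert, if_neg (hs e)]
      exact zero_mem _
    · rw [List.concat_eq_append] at hu hl ⊢
      obtain ⟨w, ⟨h1, -⟩, h2⟩ := isPath_append.mp hu
      rw [word_append, word, word, one_mul, ← mul_assoc, ← mul_assoc, ghost_mul_edge]
      split_ifs with hef
      · subst hef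
        rw [mul_assoc, vert_mul_word h2, if_pos h1]
        refine Submodule.subset_span ⟨l', ⟨w, h2⟩, hl.imp (fun h => ?_) id, rfl⟩
        simp at h; omega
      · simp

lemma exists_eval_of_mem_deep {v : G.V} {β : LeavittPathAlgebra K G} (h : β ∈ deep K G 0 v) :
    ∃ z ∈ pathsTo K G v, β = eval K G z * vert K G v := by
  induction h using Submodule.span_induction with
  | mem β hβ =>
    obtain ⟨l, h1, -, rfl⟩ := hβ
    exact ⟨Finsupp.single l 1, Finsupp.single_mem_supported K _ h1, by simp [eval_single]⟩
  | zero => exact ⟨0, zero_mem _, by simp⟩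
  | add a b _ _ ha hb =>
    obtain ⟨z₁, h₁, rfl⟩ := ha
    obtain ⟨z₂, h₂, rfl⟩ := hb
    exact ⟨z₁ + z₂, add_mem h₁ h₂, by rw [map_add, add_mul]⟩
  | smul c a _ ha =>
    obtain ⟨z, h, rfl⟩ := ha
    exact ⟨c • z, Submodule.smul_mem _ _ h, by rw [map_smul, smul_mul_assoc]⟩

lemma exists_eval_of_vert_mul {v : G.V} (w : G.V) {β : LeavittPathAlgebra K G}
    (h : β ∈ deep K G 0 v) :
    ∃ z ∈ pathsFromTo K G w v, vert K G w * β = eval K G z * vert K G v := by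
  induction h using Submodule.span_induction with
  | mem β hβ =>
    obtain ⟨l, ⟨u, h1⟩, -, rfl⟩ := hβ
    by_cases h : w = u
    · subst h
      exact ⟨Finsupp.single l 1, Finsupp.single_mem_supported K _ h1,
        by simp [eval_single, vert_mul_word h1]⟩
    · exact ⟨0, zero_mem _, by simp [vert_mul_word h1, h]⟩
  | zero => exact ⟨0, zero_mem _, by simp⟩
  | add a b _ _ ha hb =>
    obtain ⟨z₁, h₁, h₁'⟩ := ha
    obtain ⟨z₂, h₂, h₂'⟩ := hb
    exact ⟨z₁ + z₂, add_mem h₁ h₂, by rw [map_add, add_mul, mul_add, h₁', h₂']⟩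
  | smul c a _ ha =>
    obtain ⟨z, h, h'⟩ := ha
    exact ⟨c • z, Submodule.smul_mem _ _ h, by rw [map_smul, smul_mul_assoc, mul_smul_comm, h']⟩

/-- By repeated use of the Cuntz–Krieger relation, `1` lies in the right ideal generated by the
paths that are long or end in a sink. -/
lemma exists_one_eq_sum (n : ℕ) :
    ∃ (k : ℕ) (v : Fin k → G.V) (β c : Fin k → LeavittPathAlgebra K G),
      (∀ i, β i ∈ deep K G n (v i)) ∧ 1 = ∑ i, β i * c i := by
  set M : Set (LeavittPathAlgebra K G) := {x | ∃ l v c, G.EndsAt l v ∧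
    (n ≤ l.length ∨ G.IsSink v) ∧ x = word K G l * vert K G v * c} with hM
  have key : ∀ n' l v c, G.EndsAt l v → n ≤ l.length + n' →
      word K G l * vert K G v * c ∈ Submodule.span K M := by
    intro n'
    induction n' with
    | zero =>
      intro l v c hl hn
      exact Submodule.subset_span ⟨l, v, c, hl, Or.inl hn, rfl⟩
    | succ n' ih =>
      intro l v c hl hn
      by_cases hv : G.IsSink v
      · exact Submodule.subset_span ⟨l, v, c, hl, Or.inr hv, rfl⟩
      · have hv' : G.IsRegular v := by
          unfold FinGraph.IsRegular; simpa [FinGraph.IsSink] using hv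
        obtain ⟨u, hu⟩ := hl
        rw [vert_eq_sum v hv', Finset.mul_sum, Finset.sum_mul]
        refine Submodule.sum_mem _ fun e he => ?_
        have he' : G.s e = v := by simpa using he
        have := ih (e :: l) (G.r e) (ghost K G e * c) ⟨u, rfl, by rwa [he']⟩ (by simp; omega)
        rw [word, mul_assoc (word K G l), edge_mul_vert_self] at this
        simpa [mul_assoc] using this
  have h1 : (1 : LeavittPathAlgebra K G) ∈ Submodule.span K M := by
    rw [one_eq_sum_vert]
    refine Submodule.sum_mem _ fun v _ => ?_
    simpa [word] using key n [] v 1 ⟨v, rfl⟩ (by simp)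
  obtain ⟨k, a, g, hg⟩ := Submodule.mem_span_set'.mp h1
  choose l v c h2 h3 h4 using fun i => (g i).2
  refine ⟨k, v, fun i => word K G (l i) * vert K G (v i), fun i => a i • c i,
    fun i => Submodule.subset_span ⟨l i, h2 i, h3 i, rfl⟩, ?_⟩
  rw [← hg]
  exact Finset.sum_congr rfl fun i _ => by rw [h4, mul_smul_comm]

end Deep

/-! ### Idempotents are diagonalizable -/

section Diagonal

variable {K : Type} [Field K] {G : FinGraph}

/-- One more than the largest length of a word occurring in `y`; it is `0` for `y = 0`. -/
def wdeg {ι : Type} (y : Words K ι) : ℕ := y.support.sup fun l => l.length + 1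

lemma lt_wdeg {ι : Type} {y : Words K ι} {l : List ι} (h : y l ≠ 0) : l.length < wdeg y :=
  Finset.le_sup (f := fun l : List ι => l.length + 1) (by simpa using h)

lemma wdeg_le {ι : Type} {y : Words K ι} {n : ℕ} (h : ∀ l, y l ≠ 0 → l.length < n) :
    wdeg y ≤ n :=
  Finset.sup_le fun l hl => h l (by simpa using hl)

lemma exists_wdeg_eq {ι : Type} {y : Words K ι} (h : y ≠ 0) :
    ∃ l, y l ≠ 0 ∧ wdeg y = l.length + 1 := by
  obtain ⟨l, hl, h'⟩ := Finset.exists_mem_eq_sup y.support (by simpa using h)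
    fun l => l.length + 1
  exact ⟨l, by simpa using hl, h'⟩

variable {ι : Type} [Fintype ι]

/-- The combinations of paths `y j`, ending in `v j`, generate the right ideal `ε L_K(G)`. -/
structure Generates (ε : LeavittPathAlgebra K G) (v : ι → G.V) (y : ι → Words K G.E) : Prop where
  mem : ∀ j, y j ∈ pathsTo K G (v j)
  fix : ∀ j, ε * (eval K G (y j) * vert K G (v j)) = eval K G (y j) * vert K G (v j)
  gen : ∃ c : ι → LeavittPathAlgebra K G, ε = ∑ j, eval K G (y j) * vert K G (v j) * c j

/-- The nonzero members of `y` are right linearly independent over the path algebra. -/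
def Indep (v : ι → G.V) (y : ι → Words K G.E) : Prop :=
  ∀ (w : G.V) (x : ι → Words K G.E), (∀ i, x i ∈ pathsFromTo K G (v i) w) → ∑ i, wmul (y i) (x i) = 0 →
    ∀ i, y i = 0 ∨ x i = 0

/-- Choice of the generator whose degree can be lowered, given the factors of a dependency relation
`∑ i, y i * x i = 0`: among the products of largest total degree, one whose right factor has the
smallest degree. -/
lemma exists_pivot (y x : ι → Words K G.E) (i : ι) (hy : y i ≠ 0) (hx : x i ≠ 0) :
    ∃ i₀, y i₀ ≠ 0 ∧ x i₀ ≠ 0 ∧ ∀ i, y i ≠ 0 → x i ≠ 0 → ∀ k, k + 1 ≤ wdeg (x i) →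
      k + 1 < wdeg (x i₀) → wdeg (y i) + k + 2 ≤ wdeg (y i₀) + wdeg (x i₀) := by
  classical
  let S : Finset ι := Finset.univ.filter fun i => y i ≠ 0 ∧ x i ≠ 0
  obtain ⟨i₁, h₁, hmax⟩ := S.exists_max_image (fun i => wdeg (y i) + wdeg (x i))
    ⟨i, by simp [S, hy, hx]⟩
  obtain ⟨i₀, h₀, hmin⟩ := (S.filter fun i => wdeg (y i) + wdeg (x i) =
    wdeg (y i₁) + wdeg (x i₁)).exists_min_image (fun i => wdeg (x i)) ⟨i₁, by simp [h₁]⟩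
  simp only [S, Finset.mem_filter, Finset.mem_univ, true_and] at h₀ hmin hmax
  refine ⟨i₀, h₀.1.1, h₀.1.2, fun i hyi hxi k hk hk' => ?_⟩
  have h1 := hmax i ⟨hyi, hxi⟩
  by_cases h : wdeg (y i) + wdeg (x i) = wdeg (y i₁) + wdeg (x i₁)
  · have := hmin i ⟨⟨hyi, hxi⟩, h⟩
    omega
  · omega

/-- The weak algorithm: a nontrivial dependency relation allows to replace one of the generators
by another one of smaller degree. -/
lemma Generates.reduce {ε : LeavittPathAlgebra K G} {v : ι → G.V} {y : ι → Words K G.E}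
    (h : Generates ε v y) (hn : ¬ Indep v y) :
    ∃ y' : ι → Words K G.E, Generates ε v y' ∧ ∑ i, wdeg (y' i) < ∑ i, wdeg (y i) := by
  classical
  simp only [Indep, not_forall, not_or] at hn
  obtain ⟨w, x, hx, hsum, i₁, hy₁, hx₁⟩ := hn
  obtain ⟨i₀, hy₀, hx₀, hmax⟩ := exists_pivot y x i₁ hy₁ hx₁
  obtain ⟨γ, hγ0, hγ⟩ := exists_wdeg_eq hx₀
  have hγp : G.IsPath (v i₀) γ w := mem_supported_iff.mp (hx i₀) γ hγ0
  set t : ι → Words K G.E := fun i => strip γ (x i) with ht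
  have htm : ∀ i, t i ∈ pathsFromTo K G (v i) (v i₀) := fun i => strip_mem (hx i) hγp
  have ht0 : t i₀ = Finsupp.single [] (x i₀ γ) := by
    ext l
    cases l with
    | nil => simp [ht]
    | cons e l =>
      rw [Finsupp.single_eq_of_ne (by simp)]
      by_contra hne
      have := lt_wdeg (y := x i₀) (l := γ ++ e :: l) hne
      simp at this
      omega
  set y₀ : Words K G.E := ∑ i, wmul (y i) (t i) with hy0
  have hdeg : wdeg y₀ < wdeg (y i₀) := by
    obtain ⟨l₀, -, hl₀⟩ := exists_wdeg_eq hy₀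
    refine lt_of_le_of_lt (wdeg_le (n := wdeg (y i₀) - 1) fun l hl => ?_) (by omega)
    have h1 : y₀ = -∑ i, (strip γ (wmul (y i) (x i)) - wmul (y i) (t i)) := by
      rw [Finset.sum_sub_distrib, ← map_sum, hsum, map_zero, zero_sub, neg_neg]
    rw [h1, Finsupp.neg_apply, neg_ne_zero, Finsupp.finsetSum_apply] at hl
    obtain ⟨i, -, hi⟩ := Finset.exists_ne_zero_of_sum_ne_zero hl
    have hyi : y i ≠ 0 := by
      rintro h; simp [h, wmul_zero_left] at hi
    have hxi : x i ≠ 0 := by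
      rintro h; simp [h, ht] at hi
    refine strip_wmul_sub γ (y i) (wdeg (y i)) _ (fun l hl => lt_wdeg hl) (x i)
      (fun l' hl' hlen => ?_) l hi
    have := hmax i hyi hxi l'.length (lt_wdeg hl') (by omega)
    omega
  have htv : ∀ i, vert K G (v i) * (eval K G (t i) * vert K G (v i₀)) =
      eval K G (t i) * vert K G (v i₀) := fun i => vert_mul_eval (htm i)
  have hev : eval K G y₀ * vert K G (v i₀) = ∑ i, eval K G (y i) * vert K G (v i) *
      (eval K G (t i) * vert K G (v i₀)) := by
    rw [hy0, map_sum, Finset.sum_mul]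
    exact Finset.sum_congr rfl fun i _ => by
      rw [eval_wmul, mul_assoc, mul_assoc (eval K G (y i)), htv]
  refine ⟨Function.update y i₀ y₀, ⟨fun j => ?_, fun j => ?_, ?_⟩, ?_⟩
  · by_cases hj : j = i₀
    · subst hj
      rw [Function.update_self]
      exact Submodule.sum_mem _ fun i _ => wmul_mem (h.mem i) (htm i)
    · rw [Function.update_of_ne hj]; exact h.mem j
  · by_cases hj : j = i₀
    · subst hj
      rw [Function.update_self, hev, Finset.mul_sum]
      exact Finset.sum_congr rfl fun i _ => by rw [← mul_assoc, h.fix]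
    · rw [Function.update_of_ne hj]; exact h.fix j
  · obtain ⟨c, hc⟩ := h.gen
    -- solve for the old generator `y i₀`, whose coefficient in `y₀` is the scalar `x i₀ γ`
    set a := (x i₀ γ)⁻¹ with ha
    refine ⟨fun j => if j = i₀ then a • c i₀ else
      c j - a • (eval K G (t j) * vert K G (v i₀) * c i₀), ?_⟩
    rw [hc, ← Finset.add_sum_erase _ _ (Finset.mem_univ i₀),
      ← Finset.add_sum_erase _ (fun j => eval K G (Function.update y i₀ y₀ j) * _ * _)
        (Finset.mem_univ i₀)]
    simp only [Function.update_self, if_true]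
    rw [hev, ← Finset.add_sum_erase _ _ (Finset.mem_univ i₀), ht0, eval_single, word]
    have h2 : ∀ j ∈ Finset.univ.erase i₀, eval K G (Function.update y i₀ y₀ j) * vert K G (v j) *
        (if j = i₀ then a • c i₀ else
          c j - a • (eval K G (t j) * vert K G (v i₀) * c i₀)) =
        eval K G (y j) * vert K G (v j) * c j - eval K G (y j) * vert K G (v j) *
          (eval K G (t j) * vert K G (v i₀)) * (a • c i₀) := by
      intro j hj
      have hj' := Finset.ne_of_mem_erase hj
      rw [if_neg hj', Function.update_of_ne hj', mul_sub]
      simp only [mul_smul_comm, mul_assoc]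
    rw [Finset.sum_congr rfl h2, Finset.sum_sub_distrib, add_mul, Finset.sum_mul]
    have h3 : eval K G (y i₀) * vert K G (v i₀) * (x i₀ γ • 1 * vert K G (v i₀)) * (a • c i₀) =
        eval K G (y i₀) * vert K G (v i₀) * c i₀ := by
      rw [smul_mul_assoc, one_mul, mul_smul_comm _ (eval K G (y i₀) * _), smul_mul_smul_comm,
        mul_assoc (eval K G (y i₀)), vert_mul_self, ha, mul_inv_cancel₀ hγ0, one_smul]
    rw [h3]
    abel
  · refine Finset.sum_lt_sum (fun i _ => ?_) ⟨i₀, Finset.mem_univ _, by simpa using hdeg⟩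
    by_cases hi : i = i₀
    · subst hi; simpa using hdeg.le
    · rw [Function.update_of_ne hi]

lemma Generates.exists_indep {ε : LeavittPathAlgebra K G} {v : ι → G.V} {y : ι → Words K G.E}
    (h : Generates ε v y) : ∃ y' : ι → Words K G.E, Generates ε v y' ∧ Indep v y' := by
  obtain ⟨n, hn⟩ : ∃ n, n = ∑ i, wdeg (y i) := ⟨_, rfl⟩
  induction n using Nat.strong_induction_on generalizing y with
  | _ n ih =>
    by_cases hI : Indep v y
    · exact ⟨y, h, hI⟩
    · obtain ⟨y', h', hlt⟩ := h.reduce hI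
      exact ih _ (hn ▸ hlt) h' rfl

/-- Independence over the path algebra implies independence over `L_K(G)`, since multiplying by
long paths moves coefficients from `L_K(G)` to the path algebra. -/
lemma Indep.eq_zero {v : ι → G.V} {y : ι → Words K G.E} (h : Indep v y)
    (hy : ∀ j, y j ∈ pathsTo K G (v j)) (X : ι → LeavittPathAlgebra K G)
    (hX : ∀ j, vert K G (v j) * X j = X j) (h0 : ∑ j, eval K G (y j) * X j = 0) (j : ι)
    (hj : y j ≠ 0) : X j = 0 := by
  choose n hn using fun j => exists_mul_mem_deep (X j)
  obtain ⟨k, w, β, c, hβ, h1⟩ := exists_one_eq_sum (K := K) (G := G) (∑ j, n j)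
  have hmem : ∀ j i, X j * β i ∈ deep K G 0 (w i) := fun j i =>
    hn j 0 (w i) _ (deep_anti (by
      rw [zero_add]; exact Finset.single_le_sum (fun _ _ => Nat.zero_le _) (Finset.mem_univ j)) _
        (hβ i))
  choose z hz hz' using fun j i => exists_eval_of_vert_mul (v j) (hmem j i)
  have hz0 : ∀ i, z j i = 0 := by
    intro i
    refine (h (w i) (fun j => z j i) (fun j => hz j i) ?_ j).resolve_left hj
    refine eval_injective (v := w i) (Submodule.sum_mem _ fun j _ => wmul_mem (hy j) (hz j i)) ?_
    rw [map_sum, Finset.sum_mul]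
    calc ∑ j, eval K G (wmul (y j) (z j i)) * vert K G (w i)
        = ∑ j, eval K G (y j) * X j * β i := Finset.sum_congr rfl fun j _ => by
          rw [eval_wmul, mul_assoc, ← hz', ← mul_assoc (vert K G (v j)), hX, mul_assoc]
      _ = 0 := by rw [← Finset.sum_mul, h0, zero_mul]
  rw [← mul_one (X j), h1, Finset.mul_sum]
  refine Finset.sum_eq_zero fun i _ => ?_
  rw [← mul_assoc, ← hX j, mul_assoc (vert K G (v j)), hz', hz0]
  simp

/-- Every idempotent of `L_K(G)` is equivalent to a diagonal matrix of vertices. -/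
lemma exists_diag (ε : LeavittPathAlgebra K G) (hε : IsIdempotentElem ε) :
    ∃ (ι : Type) (_ : Fintype ι) (_ : DecidableEq ι) (v : ι → G.V)
      (Y Z : ι → LeavittPathAlgebra K G),
      (∀ j, Y j * vert K G (v j) = Y j) ∧ (∀ j, vert K G (v j) * Z j = Z j) ∧
      ∑ j, Y j * Z j = ε ∧ ∀ j k, Z j * Y k = if j = k then vert K G (v j) else 0 := by
  obtain ⟨n, hn⟩ := exists_mul_mem_deep ε
  obtain ⟨k, v, β, c, hβ, h1⟩ := exists_one_eq_sum (K := K) (G := G) n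
  choose y hy hy' using fun i => exists_eval_of_mem_deep
    (hn 0 (v i) (β i) (by rw [zero_add]; exact hβ i))
  have hgen : Generates ε v y := by
    refine ⟨hy, fun j => ?_, c, ?_⟩
    · rw [← hy', ← mul_assoc, hε.eq]
    · simp only [← hy', mul_assoc]
      rw [← Finset.mul_sum, ← h1, mul_one]
  clear hy hy' hn hβ h1
  obtain ⟨y, hg, hI⟩ := hgen.exists_indep
  obtain ⟨c, hc⟩ := hg.gen
  set Y : Fin k → LeavittPathAlgebra K G := fun j => eval K G (y j) * vert K G (v j) with hY
  set Z : Fin k → LeavittPathAlgebra K G := fun j => vert K G (v j) * (c j * ε) with hZ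
  have hYv : ∀ j, Y j * vert K G (v j) = Y j := fun j => by
    rw [hY]; simp only; rw [mul_assoc, vert_mul_self]
  have hZv : ∀ j, vert K G (v j) * Z j = Z j := fun j => by
    rw [hZ]; simp only; rw [← mul_assoc, vert_mul_self]
  have hYZ : ∑ j, Y j * Z j = ε := by
    calc ∑ j, Y j * Z j = (∑ j, Y j * c j) * ε := by
          rw [Finset.sum_mul]
          exact Finset.sum_congr rfl fun j _ => by
            rw [show Z j = vert K G (v j) * (c j * ε) from rfl, ← mul_assoc (Y j), hYv j, ← mul_assoc]
      _ = ε := by rw [← hc, hε.eq]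
  have hZY : ∀ i j, y i ≠ 0 → Z i * Y j = if i = j then vert K G (v i) else 0 := by
    intro i j hi
    have := hI.eq_zero hg.mem (fun i => Z i * Y j - if i = j then vert K G (v i) else 0)
      (fun i => by
        rw [mul_sub, ← mul_assoc, hZv]
        split_ifs <;> simp [vert_mul_self]) (by
        have h2 : ∀ i, eval K G (y i) * (Z i * Y j - if i = j then vert K G (v i) else 0) =
            Y i * Z i * Y j - if i = j then Y i else 0 := by
          intro i
          rw [mul_sub, ← hZv i, mul_assoc (vert K G (v i)), ← mul_assoc (eval K G (y i)),
            mul_ite, mul_zero, ← mul_assoc, hZv]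
        rw [Finset.sum_congr rfl fun i _ => h2 i, Finset.sum_sub_distrib, ← Finset.sum_mul, hYZ,
          Finset.sum_ite_eq' Finset.univ j, if_pos (Finset.mem_univ j), sub_eq_zero]
        exact hg.fix j) i hi
    exact sub_eq_zero.mp this
  classical
  refine ⟨{j // y j ≠ 0}, inferInstance, inferInstance, fun j => v j.1, fun j => Y j.1,
    fun j => Z j.1, fun j => hYv _, fun j => hZv _, ?_, fun i j => ?_⟩
  · rw [sum_subtype_ite (fun j => y j ≠ 0) (fun j => Y j * Z j), ← hYZ]
    refine Finset.sum_congr rfl fun j _ => ?_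
    split_ifs with h
    · rfl
    · rw [not_not] at h; simp [hY, h]
  · rw [hZY _ _ i.2]
    simp [Subtype.ext_iff]

end Diagonal

end LeavittPathAlgebra

/-! ### Hereditary subgraphs -/

namespace LeavittPathAlgebra

section Hereditary

variable {K : Type} [Field K]

/-- Every element of `L_K(G)` is a combination of products `a b`, where `a` is a product of
vertices and edges and `b` is a product of vertices and ghost edges. -/
lemma mem_span_mul {G : FinGraph} (x : LeavittPathAlgebra K G) :
    x ∈ Submodule.span K {z | ∃ a ∈ Submonoid.closure (Set.range (vert K G) ∪ Set.range (edge K G)),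
      ∃ b ∈ Submonoid.closure (Set.range (vert K G) ∪ Set.range (ghost K G)), z = a * b} := by
  set P := Submonoid.closure (Set.range (vert K G) ∪ Set.range (edge K G)) with hP
  set Q := Submonoid.closure (Set.range (vert K G) ∪ Set.range (ghost K G)) with hQ
  set A := Submodule.span K {z | ∃ a ∈ P, ∃ b ∈ Q, z = a * b} with hA
  have hvP : ∀ v, vert K G v ∈ P := fun v => Submonoid.subset_closure (Or.inl ⟨v, rfl⟩)
  have heP : ∀ e, edge K G e ∈ P := fun v => Submonoid.subset_closure (Or.inr ⟨v, rfl⟩)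
  have hgQ : ∀ e, ghost K G e ∈ Q := fun v => Submonoid.subset_closure (Or.inr ⟨v, rfl⟩)
  have hmem : ∀ a ∈ P, ∀ b ∈ Q, a * b ∈ A := fun a ha b hb =>
    Submodule.subset_span ⟨a, ha, b, hb, rfl⟩
  have hg : ∀ e, ∀ a ∈ P, ∀ b ∈ Q, ghost K G e * (a * b) ∈ A := by
    intro e a ha
    induction ha using Submonoid.closure_induction_left with
    | one =>
      intro b hb
      simpa using hmem 1 (one_mem _) _ (mul_mem (hgQ e) hb)
    | mul_left g hg' a ha ih =>
      intro b hb
      rcases hg' with ⟨v, rfl⟩ | ⟨f, rfl⟩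
      · rw [mul_assoc, ← mul_assoc, ghost_mul_vert]
        split_ifs
        · exact ih b hb
        · simp
      · rw [mul_assoc, ← mul_assoc, ghost_mul_edge]
        split_ifs
        · rw [← mul_assoc]; exact hmem _ (mul_mem (hvP _) ha) _ hb
        · simp
  have hstep : ∀ g : LeavittPathAlgebra K G, (∀ a ∈ P, ∀ b ∈ Q, g * (a * b) ∈ A) →
      ∀ z ∈ A, g * z ∈ A := by
    intro g hg z hz
    induction hz using Submodule.span_induction with
    | mem z hz => obtain ⟨a, ha, b, hb, rfl⟩ := hz; exact hg a ha b hb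
    | zero => simp
    | add a b _ _ ha hb => rw [mul_add]; exact add_mem ha hb
    | smul c a _ ha => rw [mul_smul_comm]; exact Submodule.smul_mem _ _ ha
  have hall : ∀ z ∈ A, x * z ∈ A := by
    induction x using induction_on with
    | zero => simp
    | add a b ha hb => intro z hz; rw [add_mul]; exact add_mem (ha z hz) (hb z hz)
    | smul k a ha => intro z hz; rw [smul_mul_assoc]; exact Submodule.smul_mem _ _ (ha z hz)
    | mul a b ha hb => intro z hz; rw [mul_assoc]; exact ha _ (hb z hz)
    | hv v =>
      exact hstep _ fun a ha b hb => by rw [← mul_assoc]; exact hmem _ (mul_mem (hvP v) ha) _ hb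
    | he e =>
      exact hstep _ fun a ha b hb => by rw [← mul_assoc]; exact hmem _ (mul_mem (heP e) ha) _ hb
    | hg e => exact hstep _ (hg e)
  simpa using hall 1 (by simpa using hmem 1 (one_mem _) 1 (one_mem _))

/-- For a subgraph `F` of `E` containing every edge of `E` that starts in `F`, the algebra
`L_K(F)` is the corner of `L_K(E)` at the sum of the vertices of `F`. -/
lemma exists_incl {F E : FinGraph} (iV : F.V → E.V) (iE : F.E → E.E)
    (hV : Function.Injective iV) (hE : Function.Injective iE)
    (hs : ∀ e, E.s (iE e) = iV (F.s e)) (hr : ∀ e, E.r (iE e) = iV (F.r e))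
    (hfull : ∀ e u, E.s e = iV u → ∃ f, iE f = e) :
    ∃ χ : LeavittPathAlgebra K F →ₙₐ[K] LeavittPathAlgebra K E,
      (∀ v, χ (vert K F v) = vert K E (iV v)) ∧ Function.Injective χ ∧
      Set.range χ = {x | (∑ u, vert K E (iV u)) * x * (∑ u, vert K E (iV u)) = x} := by
  classical
  have hfam : IsFamily F (fun v => vert K E (iV v)) (fun e => edge K E (iE e))
      (fun e => ghost K E (iE e)) := by
    refine ⟨fun v w => ?_, fun e => ?_, fun e => ?_, fun e => ?_, fun e => ?_, fun e f => ?_,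
      fun v hv => ?_⟩
    · rw [vert_mul_vert]; simp [hV.eq_iff]
    · rw [← hs, vert_mul_edge_self]
    · rw [← hr, edge_mul_vert_self]
    · rw [← hr, vert_mul_ghost_self]
    · rw [← hs, ghost_mul_vert_self]
    · rw [ghost_mul_edge]; simp [hE.eq_iff, hr]
    · obtain ⟨f, rfl⟩ := hv
      rw [vert_eq_sum (iV (F.s f)) ⟨iE f, hs f⟩, ← Finset.sum_image (f := fun e =>
        edge K E e * ghost K E e) (g := iE) hE.injOn]
      refine Finset.sum_congr ?_ fun _ _ => rfl
      ext e
      simp only [Finset.mem_filter, Finset.mem_univ, true_and, Finset.mem_image]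
      constructor
      · intro h
        obtain ⟨g, rfl⟩ := hfull e _ h
        exact ⟨g, hV ((hs g).symm.trans h), rfl⟩
      · rintro ⟨g, h, rfl⟩
        rw [hs, h]
  obtain ⟨χ, hχv, hχe, hχg⟩ := exists_hom (K := K) hfam
  have hone : χ 1 = ∑ u, vert K E (iV u) := by
    rw [one_eq_sum_vert, map_sum]; exact Finset.sum_congr rfl fun u _ => hχv u
  refine ⟨χ, hχv, ?_, ?_⟩
  · -- the left regular representation of `L_K(F)` extends to a representation of `L_K(E)`
    let a : E.E → LeavittPathAlgebra K F := fun e => if h : ∃ f, iE f = e then edge K F h.choose else 0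
    let b : E.E → LeavittPathAlgebra K F := fun e => if h : ∃ f, iE f = e then ghost K F h.choose else 0
    have ha : ∀ f, a (iE f) = edge K F f := by
      intro f
      have h : ∃ f', iE f' = iE f := ⟨f, rfl⟩
      simp only [a]
      rw [dif_pos h, hE h.choose_spec]
    have hb : ∀ f, b (iE f) = ghost K F f := by
      intro f
      have h : ∃ f', iE f' = iE f := ⟨f, rfl⟩
      simp only [b]
      rw [dif_pos h, hE h.choose_spec]
    have ha0 : ∀ e, (¬ ∃ f, iE f = e) → a e = 0 := fun e h => dif_neg h
    have hb0 : ∀ e, (¬ ∃ f, iE f = e) → b e = 0 := fun e h => dif_neg h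
    obtain ⟨W, _, _, j, ρ, hj, hρv, hρe⟩ := exists_rep (K := K) (G := E)
      (Q := LeavittPathAlgebra K F) (fun e => LinearMap.mulLeft K (a e))
      (fun e => LinearMap.mulLeft K (b e))
      (fun e q => by
        by_cases h : ∃ f, iE f = e
        · obtain ⟨f, rfl⟩ := h
          simp only [LinearMap.mulLeft_apply, ha, hb, ← mul_assoc]
          rw [mul_assoc (edge K F f), ghost_mul_edge, if_pos rfl, edge_mul_vert_self]
        · simp [ha0 e h])
      (fun e q => by
        by_cases h : ∃ f, iE f = e
        · obtain ⟨f, rfl⟩ := h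
          simp only [LinearMap.mulLeft_apply, ha, hb, ← mul_assoc]
          rw [ghost_mul_edge, if_pos rfl, vert_mul_ghost_self]
        · simp [hb0 e h])
      (fun e e' q hne _ => by
        by_cases h : ∃ f, iE f = e
        · by_cases h' : ∃ f, iE f = e'
          · obtain ⟨f, rfl⟩ := h
            obtain ⟨f', rfl⟩ := h'
            simp only [LinearMap.mulLeft_apply, ha, hb, ← mul_assoc]
            rw [ghost_mul_edge, if_neg (fun h => hne (congrArg iE h)), zero_mul]
          · simp [ha0 e' h']
        · simp [hb0 e h])
    simp only [LinearMap.mulLeft_apply] at hρe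
    have hedge : ∀ f q, ρ (edge K E (iE f)) (Pi.single (iV (F.r f)) (j (vert K F (F.r f) * q))) =
        Pi.single (iV (F.s f)) (j (edge K F f * q)) := by
      intro f q
      have := hρe (iE f) (edge K F f * q)
      rw [ha, hb, hs, hr, ← mul_assoc (ghost K F f), ghost_mul_edge, if_pos rfl,
        ← mul_assoc (edge K F f), edge_mul_vert_self] at this
      exact this
    have hghost : ∀ f q, ρ (ghost K E (iE f))
        (Pi.single (iV (F.s f)) (j (vert K F (F.s f) * q))) =
        Pi.single (iV (F.r f)) (j (ghost K F f * q)) := by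
      intro f q
      have h1 : Pi.single (iV (F.s f)) (j (vert K F (F.s f) * q)) =
          ∑ g ∈ Finset.univ.filter (fun g => F.s g = F.s f), ρ (edge K E (iE g))
            (Pi.single (iV (F.r g)) (j (ghost K F g * q))) := by
        rw [vert_eq_sum (F.s f) ⟨f, rfl⟩, Finset.sum_mul, map_sum,
          ← LinearMap.coe_single K (fun _ : E.V => W), map_sum]
        refine Finset.sum_congr rfl fun g hg => ?_
        have hg' : F.s g = F.s f := by simpa using hg
        have := hedge g (ghost K F g * q)
        rw [← mul_assoc, vert_mul_ghost_self, hg', ← mul_assoc] at this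
        rw [LinearMap.coe_single, ← this]
      rw [h1, map_sum, Finset.sum_eq_single f]
      · rw [← Module.End.mul_apply, ← map_mul, ghost_mul_edge, if_pos rfl, hρv, hr,
          Pi.single_eq_same]
      · intro g _ hg
        rw [← Module.End.mul_apply, ← map_mul, ghost_mul_edge, if_neg (fun h => hg (hE h).symm),
          map_zero, LinearMap.zero_apply]
      · simp
    let j' : LeavittPathAlgebra K F → (E.V → W) := fun q => ∑ u, Pi.single (iV u) (j (vert K F u * q))
    have hj' : ∀ q u, j' q (iV u) = j (vert K F u * q) := by
      intro q u
      simp only [j', Finset.sum_apply]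
      rw [Finset.sum_eq_single u, Pi.single_eq_same]
      · intro w _ hw
        exact Pi.single_eq_of_ne (fun h => hw (hV h).symm) _
      · simp
    have hj1 : ∀ q u, vert K F u * q = q → j' q = Pi.single (iV u) (j q) := by
      intro q u hq
      simp only [j']
      rw [Finset.sum_eq_single u, hq]
      · intro w _ hw
        rw [← hq, ← mul_assoc, vert_mul_vert, if_neg hw, zero_mul, map_zero, Pi.single_zero]
      · simp
    have hρ : ∀ x q, ρ (χ x) (j' q) = j' (x * q) := by
      intro x
      induction x using induction_on with
      | zero => intro q; simp [j']
      | add a b ha hb =>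
        intro q
        rw [map_add, map_add, LinearMap.add_apply, ha, hb]
        simp only [j', add_mul, mul_add, map_add, Pi.single_add, Finset.sum_add_distrib]
      | smul k a ha =>
        intro q
        rw [map_smul, map_smul, LinearMap.smul_apply, ha]
        simp only [j', smul_mul_assoc, mul_smul_comm, map_smul, Pi.single_smul, Finset.smul_sum]
      | mul a b ha hb =>
        intro q; rw [map_mul, map_mul, Module.End.mul_apply, hb, ha, mul_assoc]
      | hv v =>
        intro q
        rw [hχv, hρv, hj', hj1 _ v (by rw [← mul_assoc, vert_mul_self])]
      | he f =>
        intro q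
        rw [hχe, ← edge_mul_vert_self, map_mul, Module.End.mul_apply, hρv, hr, hj', hedge,
          hj1 _ (F.s f) (by rw [← mul_assoc, vert_mul_edge_self])]
      | hg f =>
        intro q
        rw [hχg, ← ghost_mul_vert_self, map_mul, Module.End.mul_apply, hρv, hs, hj', hghost,
          hj1 _ (F.r f) (by rw [← mul_assoc, vert_mul_ghost_self])]
    rw [injective_iff_map_eq_zero]
    intro x hx
    have h1 := hρ x 1
    rw [hx, map_zero, LinearMap.zero_apply, mul_one] at h1
    rw [← one_mul x, one_eq_sum_vert, Finset.sum_mul]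
    refine Finset.sum_eq_zero fun u _ => hj ?_
    rw [map_zero, ← hj', ← h1, Pi.zero_apply]
  · set T := ∑ u, vert K E (iV u)
    apply Set.Subset.antisymm
    · rintro _ ⟨x, rfl⟩
      rw [Set.mem_ofPred_eq, ← hone, ← map_mul, ← map_mul, one_mul, mul_one]
    · intro x hx
      rw [Set.mem_ofPred_eq] at hx
      have hadd : ∀ {x y}, x ∈ Set.range χ → y ∈ Set.range χ → x + y ∈ Set.range χ := by
        rintro _ _ ⟨x, rfl⟩ ⟨y, rfl⟩; exact ⟨x + y, map_add _ _ _⟩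
      have hmul : ∀ {x y}, x ∈ Set.range χ → y ∈ Set.range χ → x * y ∈ Set.range χ := by
        rintro _ _ ⟨x, rfl⟩ ⟨y, rfl⟩; exact ⟨x * y, map_mul _ _ _⟩
      have hzero : 0 ∈ Set.range χ := ⟨0, map_zero _⟩
      have hP : ∀ a ∈ Submonoid.closure (Set.range (vert K E) ∪ Set.range (edge K E)),
          ∀ u, vert K E (iV u) * a ∈ Set.range χ := by
        intro a ha
        induction ha using Submonoid.closure_induction_left with
        | one => intro u; exact ⟨vert K F u, by rw [hχv, mul_one]⟩
        | mul_left g hg a ha ih =>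
          intro u
          rw [← mul_assoc]
          rcases hg with ⟨v, rfl⟩ | ⟨e, rfl⟩
          · rw [vert_mul_vert]
            split_ifs
            · exact ih u
            · rwa [zero_mul]
          · rw [vert_mul_edge]
            split_ifs with h
            · obtain ⟨f, rfl⟩ := hfull e u h.symm
              rw [← edge_mul_vert_self, mul_assoc, hr]
              exact hmul ⟨edge K F f, hχe f⟩ (ih _)
            · rwa [zero_mul]
      have hQ : ∀ b ∈ Submonoid.closure (Set.range (vert K E) ∪ Set.range (ghost K E)),
          ∀ u, b * vert K E (iV u) ∈ Set.range χ := by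
        intro b hb
        induction hb using Submonoid.closure_induction_right with
        | one => intro u; exact ⟨vert K F u, by rw [hχv, one_mul]⟩
        | mul_right b hb g hg ih =>
          intro u
          rw [mul_assoc]
          rcases hg with ⟨v, rfl⟩ | ⟨e, rfl⟩
          · rw [vert_mul_vert]
            split_ifs with h
            · rw [h]; exact ih u
            · rwa [mul_zero]
          · rw [ghost_mul_vert]
            split_ifs with h
            · obtain ⟨f, rfl⟩ := hfull e u h
              rw [← vert_mul_ghost_self, ← mul_assoc, hr]
              exact hmul (ih _) ⟨ghost K F f, hχg f⟩
            · rwa [mul_zero]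
      rw [← hx]
      have hx' := mem_span_mul x
      clear hx
      induction hx' using Submodule.span_induction with
      | mem z hz =>
        obtain ⟨a, ha, b, hb, rfl⟩ := hz
        rw [← mul_assoc, mul_assoc]
        refine hmul ?_ ?_
        · rw [Finset.sum_mul]
          exact Finset.sum_induction _ (· ∈ Set.range χ) (fun _ _ => hadd) hzero fun u _ => hP a ha u
        · rw [Finset.mul_sum]
          exact Finset.sum_induction _ (· ∈ Set.range χ) (fun _ _ => hadd) hzero fun u _ => hQ b hb u
      | zero => simpa using hzero
      | add a b _ _ ha hb => rw [mul_add, add_mul]; exact hadd ha hb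
      | smul c a _ ha =>
        obtain ⟨y, hy⟩ := ha
        exact ⟨c • y, by rw [map_smul, hy, mul_smul_comm, smul_mul_assoc]⟩

end Hereditary

end LeavittPathAlgebra

/-! ### Transfer of corners -/

namespace LeavittPathAlgebra

section Transfer

variable {K : Type} [Field K] {S R R' : Type} [Ring S] [Ring R] [Ring R'] [Algebra K S]
  [Algebra K R] [Algebra K R']

/-- Equivalent idempotents `e = a b` and `f = b a` have isomorphic corners. -/
lemma IsCornerIso.of_equivalent {a b e f : R} (hab : a * b = e) (hba : b * a = f) (ha : e * a = a)
    (hb : b * e = b) (h : IsCornerIso K S R f) : IsCornerIso K S R e := by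
  obtain ⟨φ, hinj, hrange⟩ := h
  have haf : a * f = a := by rw [← hba, ← mul_assoc, hab, ha]
  have hfb : f * b = b := by rw [← hba, mul_assoc, hab, hb]
  have hφ : ∀ s, f * φ s * f = φ s := fun s => by
    have : φ s ∈ Set.range φ := ⟨s, rfl⟩
    rwa [hrange] at this
  have hff : f * f = f := by rw [← hba, mul_assoc, ← mul_assoc a, hab, ha]
  have hfφ : ∀ s, f * φ s = φ s := fun s => by
    rw [← hφ s, ← mul_assoc, ← mul_assoc, hff]
  have hφf : ∀ s, φ s * f = φ s := fun s => by rw [← hφ s, mul_assoc, hff]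
  refine ⟨{ toFun := fun s => a * φ s * b
            map_smul' := fun k s => by simp
            map_zero' := by simp
            map_add' := fun s t => by simp [mul_add, add_mul]
            map_mul' := fun s t => by
              rw [map_mul, mul_assoc (a * φ s), ← mul_assoc b, ← mul_assoc b, hba, hfφ]
              simp only [mul_assoc] }, fun s t hst => ?_, ?_⟩
  · have hst : a * φ s * b = a * φ t * b := hst
    apply hinj
    have := congrArg (fun x => b * x * a) hst
    simp only [mul_assoc, hba] at this
    simpa only [← mul_assoc, hba, hφ] using this
  · ext x
    constructor
    · rintro ⟨s, rfl⟩
      change e * (a * φ s * b) * e = a * φ s * b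
      rw [← mul_assoc, ← mul_assoc, ha, mul_assoc, hb]
    · intro hx
      have hx : e * x * e = x := hx
      have h1 : b * x * a ∈ Set.range φ := by
        rw [hrange]
        change f * (b * x * a) * f = b * x * a
        rw [← mul_assoc, ← mul_assoc, hfb, mul_assoc, haf]
      obtain ⟨s, hs⟩ := h1
      refine ⟨s, ?_⟩
      change a * φ s * b = x
      rw [hs, mul_assoc b, ← mul_assoc, hab, ← mul_assoc, mul_assoc, hab, hx]

/-- If `χ` identifies `R` with a corner of `R'`, then its range contains the corner of `R'` at
`χ e` for every `e`. -/
lemma mem_range_of_corner {χ : R →ₙₐ[K] R'} {g : R'}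
    (hrange : Set.range χ = {x | g * x * g = x}) (hg : g * g = g) {e : R} {x : R'}
    (hx : χ e * x * χ e = x) : x ∈ Set.range χ := by
  have h1 : g * χ e * g = χ e := by
    have : χ e ∈ Set.range χ := ⟨e, rfl⟩
    rwa [hrange] at this
  have h2 : g * χ e = χ e := by rw [← h1, ← mul_assoc, ← mul_assoc, hg]
  have h3 : χ e * g = χ e := by rw [← h1, mul_assoc, hg]
  rw [hrange]
  change g * x * g = x
  rw [← hx, ← mul_assoc, ← mul_assoc, h2, mul_assoc, h3]

lemma IsCornerIso.map {χ : R →ₙₐ[K] R'} {g : R'} (hχ : Function.Injective χ)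
    (hrange : Set.range χ = {x | g * x * g = x}) (hg : g * g = g) {e : R}
    (h : IsCornerIso K S R e) : IsCornerIso K S R' (χ e) := by
  obtain ⟨φ, hinj, hφ⟩ := h
  refine ⟨χ.comp φ, hχ.comp hinj, ?_⟩
  ext x
  constructor
  · rintro ⟨s, rfl⟩
    have : φ s ∈ Set.range φ := ⟨s, rfl⟩
    rw [hφ] at this
    have this : e * φ s * e = φ s := this
    change χ e * χ (φ s) * χ e = χ (φ s)
    rw [← map_mul, ← map_mul, this]
  · intro hx
    have hx : χ e * x * χ e = x := hx
    obtain ⟨y, rfl⟩ := mem_range_of_corner hrange hg hx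
    rw [← map_mul, ← map_mul] at hx
    have hy : y ∈ Set.range φ := by rw [hφ]; exact hχ hx
    obtain ⟨s, rfl⟩ := hy
    exact ⟨s, rfl⟩

lemma IsCornerIso.of_map {χ : R →ₙₐ[K] R'} {g : R'} (hχ : Function.Injective χ)
    (hrange : Set.range χ = {x | g * x * g = x}) (hg : g * g = g) {e : R}
    (h : IsCornerIso K S R' (χ e)) : IsCornerIso K S R e := by
  obtain ⟨φ, hinj, hφ⟩ := h
  have hmem : ∀ s, φ s ∈ Set.range χ := fun s => mem_range_of_corner hrange hg (by
    have : φ s ∈ Set.range φ := ⟨s, rfl⟩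
    rwa [hφ] at this)
  choose ψ hψ using hmem
  refine ⟨{ toFun := ψ
            map_smul' := fun k s => hχ (by simp [hψ])
            map_zero' := hχ (by simp [hψ])
            map_add' := fun s t => hχ (by simp [hψ])
            map_mul' := fun s t => hχ (by simp [hψ]) }, fun s t hst => ?_, ?_⟩
  · have hst : ψ s = ψ t := hst
    exact hinj (by rw [← hψ, hst, hψ])
  · ext x
    constructor
    · rintro ⟨s, rfl⟩
      have : φ s ∈ Set.range φ := ⟨s, rfl⟩
      rw [hφ] at this
      have this : χ e * φ s * χ e = φ s := this
      change e * ψ s * e = ψ s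
      apply hχ
      rw [map_mul, map_mul, hψ, this]
    · intro hx
      have hx : e * x * e = x := hx
      have h1 : χ x ∈ Set.range φ := by
        rw [hφ]
        change χ e * χ x * χ e = χ x
        rw [← map_mul, ← map_mul, hx]
      obtain ⟨s, hs⟩ := h1
      exact ⟨s, hχ ((hψ s).trans hs)⟩

end Transfer

/-! ### Corners at sums of vertices -/

section Corners

variable (K : Type) [Field K]

lemma sum_vert_mul_self {E : FinGraph} (S : Finset E.V) :
    (∑ u ∈ S, vert K E u) * (∑ u ∈ S, vert K E u) = ∑ u ∈ S, vert K E u := by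
  rw [Finset.sum_mul]
  refine Finset.sum_congr rfl fun u hu => ?_
  simp [Finset.mul_sum, vert_mul_vert, hu]

/-- The corner at the sum of a set `S` of vertices is a Leavitt path algebra. If an edge `f` leads
from `S` to a vertex `v` outside `S`, then passing to the graph shifted along `f` replaces `S`
by `S ∪ {v}` up to equivalence; if there is no such edge, `S` is hereditary. -/
lemma exists_corner_sum (n : ℕ) (E : FinGraph) (S : Finset E.V) (hn : Sᶜ.card = n) :
    ∃ G : FinGraph, IsCornerIso K (LeavittPathAlgebra K G) (LeavittPathAlgebra K E)
      (∑ u ∈ S, vert K E u) := by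
  induction n using Nat.strong_induction_on generalizing E S with
  | _ n ih =>
    by_cases hS : E.Hereditary S
    · obtain ⟨χ, -, h1, h2⟩ := exists_incl (K := K) (F := E.restrict S hS) (E := E)
        Subtype.val Subtype.val Subtype.val_injective Subtype.val_injective (fun _ => rfl)
        (fun _ => rfl) (fun e u he => ⟨⟨e, he ▸ u.2⟩, rfl⟩)
      refine ⟨E.restrict S hS, χ, h1, ?_⟩
      have h3 : ∑ u : (E.restrict S hS).V, vert K E u.1 = ∑ u ∈ S, vert K E u := by
        rw [← Finset.sum_coe_sort S]
        exact Fintype.sum_congr _ _ fun _ => rfl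
      rw [h2, h3]
    · obtain ⟨f, hfs, hfr⟩ : ∃ f, E.s f ∈ S ∧ E.r f ∉ S := by
        simpa [FinGraph.Hereditary] using hS
      have hf : E.r f ≠ E.s f := fun h => hfr (h ▸ hfs)
      obtain ⟨φ, hφ, hrange, hφv⟩ := exists_shift (K := K) f hf
      set S' : Finset (E.shift f hf).V := Finset.univ.filter fun u => u.1 ∈ S ∨ u.1 = E.r f with hS'
      have hcard : S'ᶜ.card < n := by
        have h1 : (S'ᶜ.image Subtype.val) ⊆ Sᶜ.erase (E.r f) := by
          intro u hu
          obtain ⟨u', hu', rfl⟩ := Finset.mem_image.mp hu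
          simp only [hS', Finset.mem_compl, Finset.mem_filter, Finset.mem_univ, true_and,
            not_or] at hu'
          simp [hu'.1, hu'.2]
        have h2 := Finset.card_le_card h1
        rw [Finset.card_image_of_injective _ Subtype.val_injective] at h2
        have h3 := Finset.card_erase_lt_of_mem (s := Sᶜ) (a := E.r f) (by simpa using hfr)
        omega
      obtain ⟨G, hG⟩ := ih _ hcard (E.shift f hf) S' rfl
      refine ⟨G, ?_⟩
      have hG' := IsCornerIso.map hφ hrange (coRange_mul_self f) hG
      set P := ∑ u ∈ S, vert K E u with hP
      set q := coRange K f with hq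
      have hPP : P * P = P := sum_vert_mul_self K S
      have hqP : q * P = P * q := by
        rw [hP, Finset.mul_sum, Finset.sum_mul]
        exact Finset.sum_congr rfl fun u _ => coRange_mul_vert f u
      have hqq : q * q = q := coRange_mul_self f
      have hqf : q * edge K E f = 0 := coRange_mul_edge_self f
      have hgq : ghost K E f * q = 0 := ghost_self_mul_coRange f
      have hPf : P * edge K E f = edge K E f := by
        simp [hP, Finset.sum_mul, vert_mul_edge, hfs]
      have hgP : ghost K E f * P = ghost K E f := by
        simp [hP, Finset.mul_sum, ghost_mul_vert, hfs]
      have hfP : edge K E f * P = 0 := by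
        simp [hP, Finset.mul_sum, edge_mul_vert, hfr]
      have hPg : P * ghost K E f = 0 := by
        simp [hP, Finset.sum_mul, vert_mul_ghost, hfr]
      have hfg : edge K E f * ghost K E f = 1 - q := by simp [hq, coRange]
      have hPfg : P * q + edge K E f * ghost K E f = P := by
        have : P * (edge K E f * ghost K E f) = edge K E f * ghost K E f := by
          rw [← mul_assoc, hPf]
        rw [← this, hfg, ← mul_add, add_sub_cancel, mul_one]
      have himage : φ (∑ u ∈ S', vert K (E.shift f hf) u) = P * q + vert K E (E.r f) := by
        rw [map_sum, hS', Finset.sum_filter]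
        simp only [hφv]
        rw [sum_subtype_ite (fun u => E.Survives f u)
          (fun u => if u ∈ S ∨ u = E.r f then vert K E u * q else 0)]
        have h1 : ∀ u, (if E.Survives f u then
            (if u ∈ S ∨ u = E.r f then vert K E u * q else 0) else 0) =
            (if u ∈ S then vert K E u * q else 0) + if u = E.r f then vert K E u * q else 0 := by
          intro u
          by_cases hs : E.Survives f u
          · by_cases hu : u = E.r f
            · subst hu; simp [hs, hfr]
            · simp [hs, hu]
          · simp [hs, hq, coRange_of_not_survives f hs]
        rw [Finset.sum_congr rfl fun u _ => h1 u, Finset.sum_add_distrib, Finset.sum_ite_mem,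
          Finset.univ_inter, Finset.sum_ite_eq' Finset.univ, if_pos (Finset.mem_univ _),
          ← Finset.sum_mul, hq, coRange_mul_vert_of_ne f hf]
      have hPqPq : P * q * (P * q) = P * q := by
        rw [mul_assoc, ← mul_assoc q, hqP, mul_assoc, hqq, ← mul_assoc, hPP]
      rw [himage] at hG'
      refine IsCornerIso.of_equivalent (a := P * q + edge K E f) (b := P * q + ghost K E f)
        ?_ ?_ ?_ ?_ hG'
      · have h1 : P * q * ghost K E f = 0 := by rw [← hqP, mul_assoc, hPg, mul_zero]
        have h2 : edge K E f * (P * q) = 0 := by rw [← mul_assoc, hfP, zero_mul]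
        rw [add_mul, mul_add, mul_add, hPqPq, h1, h2, add_zero, zero_add, hPfg]
      · have h1 : P * q * edge K E f = 0 := by rw [mul_assoc, hqf, mul_zero]
        have h2 : ghost K E f * (P * q) = 0 := by rw [← mul_assoc, hgP, hgq]
        rw [add_mul, mul_add, mul_add, hPqPq, h1, h2, add_zero, zero_add, ghost_mul_edge,
          if_pos rfl]
      · rw [mul_add, ← mul_assoc, hPP, hPf]
      · rw [add_mul, hgP, mul_assoc, hqP, ← mul_assoc, hPP]

/-- The graph `E` with, for each `j`, a new vertex and an edge from it to `v j`. -/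
abbrev _root_.FinGraph.addSources (E : FinGraph) {ι : Type} [Fintype ι] [DecidableEq ι]
    (v : ι → E.V) : FinGraph where
  V := E.V ⊕ ι
  E := E.E ⊕ ι
  s := Sum.map E.s id
  r := Sum.elim (fun e => Sum.inl (E.r e)) (fun j => Sum.inl (v j))

variable {K}

/-- With a new source attached to every vertex of a diagonalization of `ε`, the idempotent `ε`
becomes equivalent to the sum of the new vertices, so `exists_corner_sum` applies. -/
lemma exists_corner {E : FinGraph} (ε : LeavittPathAlgebra K E) (hε : IsIdempotentElem ε) :
    ∃ G : FinGraph, IsCornerIso K (LeavittPathAlgebra K G) (LeavittPathAlgebra K E) ε := by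
  classical
  obtain ⟨ι, _, _, v, Y, Z, hY, hZ, hYZ, hZY⟩ := exists_diag ε hε
  set E' := E.addSources v
  obtain ⟨χ, hχv, hχ, hrange⟩ := exists_incl (K := K) (F := E) (E := E') Sum.inl Sum.inl
    Sum.inl_injective Sum.inl_injective (fun _ => rfl) (fun _ => rfl) (fun e u he => by
      cases e with
      | inl e => exact ⟨e, rfl⟩
      | inr j => exact absurd he Sum.inr_ne_inl)
  obtain ⟨G, hG⟩ := exists_corner_sum K _ E' (Finset.univ.image Sum.inr) rfl
  rw [Finset.sum_image Sum.inr_injective.injOn] at hG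
  have hsrc : ∀ j, edge K E' (Sum.inr j) * ghost K E' (Sum.inr j) = vert K E' (Sum.inr j) := by
    intro j
    rw [vert_eq_sum (K := K) (G := E') (Sum.inr j) ⟨Sum.inr j, rfl⟩]
    rw [Finset.sum_eq_single (Sum.inr j)]
    · rintro (e | k) he hk
      · exact absurd (Finset.mem_filter.mp he).2 Sum.inl_ne_inr
      · have hkj : k = j := Sum.inr_injective (Finset.mem_filter.mp he).2
        exact absurd (congrArg Sum.inr hkj) hk
    · exact fun h => (h (Finset.mem_filter.mpr ⟨Finset.mem_univ _, rfl⟩)).elim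
  have hgv : ∀ j, vert K E' (Sum.inl (v j)) * ghost K E' (Sum.inr j) = ghost K E' (Sum.inr j) :=
    fun j => vert_mul_ghost_self (K := K) (G := E') (Sum.inr j)
  have hge : ∀ j k, ghost K E' (Sum.inr j) * edge K E' (Sum.inr k) =
      if j = k then vert K E' (Sum.inl (v j)) else 0 := fun j k => by
    rw [ghost_mul_edge]
    by_cases h : j = k
    · subst h
      rw [if_pos rfl, if_pos rfl]
      rfl
    · rw [if_neg fun h' => h (Sum.inr_injective h'), if_neg h]
  have hεY : ∀ k, ε * Y k = Y k := fun k => by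
    rw [← hYZ, Finset.sum_mul]
    simp [mul_assoc, hZY, hY]
  have hZε : ∀ k, Z k * ε = Z k := fun k => by
    rw [← hYZ, Finset.mul_sum]
    simp [← mul_assoc, hZY, hZ]
  refine ⟨G, IsCornerIso.of_map hχ hrange ?_ (IsCornerIso.of_equivalent
    (a := ∑ j, χ (Y j) * ghost K E' (Sum.inr j))
    (b := ∑ j, edge K E' (Sum.inr j) * χ (Z j)) ?_ ?_ ?_ ?_ hG)⟩
  · have := sum_vert_mul_self K (E := E') (Finset.univ.image Sum.inl)
    rwa [Finset.sum_image Sum.inl_injective.injOn] at this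
  · rw [← hYZ, map_sum, Finset.sum_mul]
    refine Finset.sum_congr rfl fun j _ => ?_
    rw [Finset.mul_sum, Finset.sum_eq_single j]
    · rw [mul_assoc, ← mul_assoc (ghost K E' _), hge, if_pos rfl, ← hχv, ← map_mul, ← map_mul, hZ]
    · intro k _ hk
      rw [mul_assoc, ← mul_assoc (ghost K E' _), hge, if_neg hk.symm, zero_mul, mul_zero]
    · simp
  · rw [Finset.sum_mul]
    refine Finset.sum_congr rfl fun j _ => ?_
    rw [Finset.mul_sum, Finset.sum_eq_single j]
    · rw [mul_assoc, ← mul_assoc (χ (Z j)), ← map_mul, hZY, if_pos rfl, hχv, hgv, hsrc]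
    · intro k _ hk
      rw [mul_assoc, ← mul_assoc (χ (Z j)), ← map_mul, hZY, if_neg hk.symm, map_zero, zero_mul,
        mul_zero]
    · simp
  · rw [Finset.mul_sum]
    exact Finset.sum_congr rfl fun j _ => by rw [← mul_assoc, ← map_mul, hεY]
  · rw [Finset.sum_mul]
    exact Finset.sum_congr rfl fun j _ => by rw [mul_assoc, ← map_mul, hZε]

end Corners

end LeavittPathAlgebra

/-- Every nonzero corner of a Leavitt path algebra of a finite graph
is isomorphic, as a `K`-algebra, to a Leavitt path algebra of a finite graph. -/
theorem corner_is_LeavittPathAlgebra (K : Type) [Field K] (E : FinGraph)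
    (ε : LeavittPathAlgebra K E) (hε : IsIdempotentElem ε) (hε0 : ε ≠ 0) :
    ∃ G : FinGraph, IsCornerIso K (LeavittPathAlgebra K G) (LeavittPathAlgebra K E) ε := by
  exact LeavittPathAlgebra.exists_corner ε hε
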